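/- arXiv:1505.00416 — 2 statements merged into one kernel-verified Lean document; each statement's English description precedes it below -/
import Mathlib

section
/- Small incremental entangling for the relative entropy of entanglement in an ancilla-free system: let ρ(t) = e^{t𝓛}(|Ψ⟩⟨Ψ|) be the solution of dρ/dt = 𝓛(ρ) with pure initial state |Ψ⟩⟨Ψ| on H_A ⊗ H_B, where 𝓛(ρ) = −i[H,ρ] + Σ_α (L_α ρ L_α† − ½ L_α† L_α ρ − ½ ρ L_α† L_α) with H Hermitian. Let E_R denote the relative entropy of entanglement with respect to the bipartite cut A–B and let d = min(d_A, d_B). Then for every ε > 0 there exists δ > 0 such that for all 0 < Δt < δ, (E_R(ρ(Δt)) − E_R(ρ(0)))/Δt ≤ 4(‖H‖ + 86 Σ_α ‖L_α‖²) ln d + ε. -/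
open Matrix Kronecker
open scoped ComplexOrder

/-- Operator norm of a complex matrix: the norm of the induced operator on Euclidean space. -/
noncomputable def opNorm {n : Type*} [Fintype n] [DecidableEq n]
    (A : Matrix n n ℂ) : ℝ :=
  ‖Matrix.toEuclideanCLM (𝕜 := ℂ) A‖

/-- Matrix logarithm of a Hermitian matrix, defined by functional calculus via the spectral
decomposition (and as `0` on non-Hermitian matrices).  Since `Real.log 0 = 0`, on a positive
semidefinite matrix this is the logarithm on the support. -/
noncomputable def mlog {n : Type*} [Fintype n] [DecidableEq n]
    (A : Matrix n n ℂ) : Matrix n n ℂ :=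
  if hA : A.IsHermitian then
    (hA.eigenvectorUnitary : Matrix n n ℂ) *
      Matrix.diagonal (fun i => (Real.log (hA.eigenvalues i) : ℂ)) *
      (star (hA.eigenvectorUnitary : Matrix n n ℂ))
  else 0

/-- The Lindblad generator `𝓛(ρ) = -i[H,ρ] + Σ_α (L_α ρ L_α† - ½ L_α† L_α ρ - ½ ρ L_α† L_α)`. -/
noncomputable def lindblad {n : Type*} [Fintype n] {ι : Type*} [Fintype ι]
    (H : Matrix n n ℂ) (L : ι → Matrix n n ℂ) (ρ : Matrix n n ℂ) : Matrix n n ℂ :=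
  -(Complex.I) • (H * ρ - ρ * H) +
    ∑ α, (L α * ρ * (L α)ᴴ - (2:ℂ)⁻¹ • ((L α)ᴴ * (L α) * ρ) - (2:ℂ)⁻¹ • (ρ * (L α)ᴴ * (L α)))

/-- Partial trace over the second tensor factor. -/
noncomputable def ptraceR {m p : Type*} [Fintype p]
    (ρ : Matrix (m × p) (m × p) ℂ) : Matrix m m ℂ :=
  Matrix.of fun i j => ∑ b, ρ (i, b) (j, b)

/-- Partial trace over the first tensor factor. -/
noncomputable def ptraceL {m p : Type*} [Fintype m]
    (ρ : Matrix (m × p) (m × p) ℂ) : Matrix p p ℂ :=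
  Matrix.of fun i j => ∑ a, ρ (a, i) (a, j)

/-- A density matrix: positive semidefinite with trace one. -/
noncomputable def IsDensityMatrix {n : Type*} [Fintype n] (ρ : Matrix n n ℂ) : Prop :=
  ρ.PosSemidef ∧ ρ.trace = 1

/-- Von Neumann entropy `S(ρ) = -Tr(ρ ln ρ) = -Σ_i λ_i ln λ_i` (with `0 ln 0 = 0`). -/
noncomputable def vNEntropy {n : Type*} [Fintype n] [DecidableEq n]
    (ρ : Matrix n n ℂ) : ℝ :=
  if h : ρ.IsHermitian then -∑ i, (h.eigenvalues i) * Real.log (h.eigenvalues i) else 0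

/-- A separable state on the bipartite cut `A–B`: a convex combination of product
density matrices. -/
noncomputable def IsSeparableState {dA dB : ℕ}
    (σ : Matrix (Fin dA × Fin dB) (Fin dA × Fin dB) ℂ) : Prop :=
  ∃ (k : ℕ) (w : Fin k → ℝ) (σA : Fin k → Matrix (Fin dA) (Fin dA) ℂ)
      (σB : Fin k → Matrix (Fin dB) (Fin dB) ℂ),
    (∀ j, 0 ≤ w j) ∧ (∑ j, w j = 1) ∧
    (∀ j, IsDensityMatrix (σA j)) ∧ (∀ j, IsDensityMatrix (σB j)) ∧
    σ = ∑ j, (w j : ℂ) • (σA j ⊗ₖ σB j)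

/-- Quantum relative entropy `D(ρ‖σ) = Tr(ρ ln ρ - ρ ln σ)` (finite expression, valid when
the support of `ρ` is contained in that of `σ`). -/
noncomputable def relEntropy {n : Type*} [Fintype n] [DecidableEq n]
    (ρ σ : Matrix n n ℂ) : ℝ :=
  ((ρ * (mlog ρ - mlog σ)).trace).re

/-- `supp ρ ⊆ supp σ`, phrased via kernels (for Hermitian matrices this is support
containment); when this fails, `D(ρ‖σ) = +∞` and `σ` does not contribute to the infimum
defining the relative entropy of entanglement. -/
noncomputable def SuppLE {n : Type*} [Fintype n] (ρ σ : Matrix n n ℂ) : Prop :=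
  ∀ v : n → ℂ, σ.mulVec v = 0 → ρ.mulVec v = 0

/-- Relative entropy of entanglement: the infimum of `D(ρ‖σ)` over separable `σ`
(the states with `D(ρ‖σ) = +∞` being discarded). -/
noncomputable def relEntEntanglement {dA dB : ℕ}
    (ρ : Matrix (Fin dA × Fin dB) (Fin dA × Fin dB) ℂ) : ℝ :=
  sInf { x : ℝ | ∃ σ : Matrix (Fin dA × Fin dB) (Fin dA × Fin dB) ℂ, IsSeparableState σ ∧ SuppLE ρ σ ∧ x = relEntropy ρ σ }


section SIE1

set_option linter.unusedSectionVars false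
set_option linter.style.haveILetI false

variable {n : Type*} [Fintype n] [DecidableEq n]

noncomputable def qf (A : Matrix n n ℂ) (v : n → ℂ) : ℝ := (star v ⬝ᵥ (A *ᵥ v)).re

lemma qf_add (A B : Matrix n n ℂ) (v : n → ℂ) : qf (A + B) v = qf A v + qf B v := by
  simp [qf, add_mulVec, dotProduct_add]

lemma qf_sub (A B : Matrix n n ℂ) (v : n → ℂ) : qf (A - B) v = qf A v - qf B v := by
  simp [qf, sub_mulVec, dotProduct_sub]

lemma qf_smul (c : ℝ) (A : Matrix n n ℂ) (v : n → ℂ) : qf ((c : ℂ) • A) v = c * qf A v := by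
  simp [qf, smul_mulVec, dotProduct_smul]

lemma qf_nonneg {A : Matrix n n ℂ} (hA : A.PosSemidef) (v : n → ℂ) : 0 ≤ qf A v :=
  (Complex.le_def.1 (hA.dotProduct_mulVec_nonneg v)).1

lemma posSemidef_of_qf {A : Matrix n n ℂ} (hA : A.IsHermitian) (h : ∀ v, 0 ≤ qf A v) :
    A.PosSemidef := by
  refine PosSemidef.of_dotProduct_mulVec_nonneg hA fun v => ?_
  have : (star v ⬝ᵥ (A *ᵥ v)).im = 0 := hA.im_star_dotProduct_mulVec_self v
  exact Complex.le_def.2 ⟨h v, this.symm⟩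

/-- eigenvectors of `A` are eigenvectors of `mlog A`. -/
lemma mlog_mulVec {A : Matrix n n ℂ} (hA : A.IsHermitian) {v : n → ℂ} {μ : ℝ}
    (h : A *ᵥ v = (μ : ℂ) • v) : mlog A *ᵥ v = ((Real.log μ : ℝ) : ℂ) • v := by
  set U : Matrix n n ℂ := (hA.eigenvectorUnitary : Matrix n n ℂ) with hU
  have hU1 : star U * U = 1 := by simp [hU]
  have hU2 : U * star U = 1 := by simp [hU]
  have hsp : A = U * diagonal (fun i => (hA.eigenvalues i : ℂ)) * star U := by
    have := hA.spectral_theorem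
    rw [Unitary.conjStarAlgAut_apply] at this
    simpa [Function.comp_def] using this
  have hml : mlog A = U * diagonal (fun i => (Real.log (hA.eigenvalues i) : ℂ)) * star U := by
    simp [mlog, hA, hU]
  set w := star U *ᵥ v with hw
  have hv : v = U *ᵥ w := by rw [hw, mulVec_mulVec, hU2, one_mulVec]
  have h1 : diagonal (fun i => (hA.eigenvalues i : ℂ)) *ᵥ w = (μ : ℂ) • w := by
    have : star U *ᵥ (A *ᵥ v) = (μ : ℂ) • w := by rw [h, mulVec_smul]
    have h3 : star U * A = diagonal (fun i => (hA.eigenvalues i : ℂ)) * star U := by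
      conv_lhs => rw [hsp]
      simp only [← Matrix.mul_assoc, hU1, Matrix.one_mul]
    rw [← this, hw, mulVec_mulVec, mulVec_mulVec, h3]
  have h2 : diagonal (fun i => (Real.log (hA.eigenvalues i) : ℂ)) *ᵥ w
      = ((Real.log μ : ℝ) : ℂ) • w := by
    ext i
    have := congrFun h1 i
    simp only [mulVec_diagonal, Pi.smul_apply, smul_eq_mul] at this ⊢
    rcases mul_eq_mul_right_iff.1 this with h | h
    · rw [Complex.ofReal_inj.1 h]
    · simp [h]
  rw [hml, ← mulVec_mulVec, ← hw, ← mulVec_mulVec, h2, mulVec_smul, ← hv]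

lemma isHermitian_conj_diag (V : Matrix n n ℂ) (c : n → ℝ) :
    (V * diagonal (fun i => (c i : ℂ)) * Vᴴ).IsHermitian := by
  apply isHermitian_mul_mul_conjTranspose
  rw [Matrix.IsHermitian, diagonal_conjTranspose]
  congr 1; ext i; simp

lemma mlog_conj {V : Matrix n n ℂ} (hV : Vᴴ * V = 1) (c : n → ℝ) :
    mlog (V * diagonal (fun i => (c i : ℂ)) * Vᴴ)
      = V * diagonal (fun i => ((Real.log (c i) : ℝ) : ℂ)) * Vᴴ := by
  have hV2 : V * Vᴴ = 1 := mul_eq_one_comm.1 hV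
  have hH := isHermitian_conj_diag V c
  set A := V * diagonal (fun i => (c i : ℂ)) * Vᴴ with hA
  have key : mlog A * V = V * diagonal (fun i => ((Real.log (c i) : ℝ) : ℂ)) := by
    have hAV : A * V = V * diagonal (fun i => (c i : ℂ)) := by
      rw [hA, Matrix.mul_assoc, hV, Matrix.mul_one]
    ext i k
    have h1 : A *ᵥ V.col k = (c k : ℂ) • V.col k := by
      ext j
      have := congrFun (congrFun hAV j) k
      rw [mul_diagonal] at this
      rw [Pi.smul_apply, smul_eq_mul, mul_comm]
      exact this
    have h2 := congrFun (mlog_mulVec hH h1) i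
    rw [mul_diagonal, mul_comm]
    exact h2
  rw [← key, Matrix.mul_assoc, hV2, Matrix.mul_one]

lemma exists_spectral {A : Matrix n n ℂ} (hA : A.IsHermitian) :
    ∃ (U : Matrix n n ℂ) (l : n → ℝ), Uᴴ * U = 1 ∧
      A = U * diagonal (fun i => (l i : ℂ)) * Uᴴ := by
  refine ⟨hA.eigenvectorUnitary, hA.eigenvalues, ?_, ?_⟩
  · rw [← star_eq_conjTranspose]; simp
  · have := hA.spectral_theorem
    rw [Unitary.conjStarAlgAut_apply] at this
    simpa [Function.comp_def, star_eq_conjTranspose] using this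

lemma mlog_isHermitian {A : Matrix n n ℂ} (hA : A.IsHermitian) : (mlog A).IsHermitian := by
  obtain ⟨U, l, hU, h⟩ := exists_spectral hA
  rw [h, mlog_conj hU]
  exact isHermitian_conj_diag U _

lemma mlog_eq_cfc {A : Matrix n n ℂ} (hA : A.IsHermitian) : mlog A = cfc Real.log A := by
  rw [hA.cfc_eq, Matrix.IsHermitian.cfc, Unitary.conjStarAlgAut_apply]
  simp [mlog, hA, Function.comp_def]

open scoped MatrixOrder Matrix.Norms.L2Operator in
lemma mlog_le_mlog {A B : Matrix n n ℂ} (hA : A.PosDef) (hAB : (B - A).PosSemidef) :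
    (mlog B - mlog A).PosSemidef := by
  have hB : B.IsHermitian := by
    have := hA.isHermitian.add hAB.isHermitian
    simpa using this
  letI : CStarAlgebra (Matrix n n ℂ) := {}
  have hA' : IsStrictlyPositive A := hA.isStrictlyPositive
  have := CFC.log_le_log (A := Matrix n n ℂ) (a := A) (b := B) (Matrix.le_iff.2 hAB) hA'
  rw [mlog_eq_cfc hB, mlog_eq_cfc hA.isHermitian]
  exact Matrix.le_iff.1 this

lemma qf_mlog_mono {A B : Matrix n n ℂ} (hA : A.PosDef) (hAB : (B - A).PosSemidef) (v : n → ℂ) :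
    qf (mlog A) v ≤ qf (mlog B) v := by
  have := qf_nonneg (mlog_le_mlog hA hAB) v
  rw [qf_sub] at this; linarith

lemma qf_conj_diag (V : Matrix n n ℂ) (c : n → ℝ) (v : n → ℂ) :
    qf (V * diagonal (fun i => (c i : ℂ)) * Vᴴ) v = ∑ i, c i * Complex.normSq ((Vᴴ *ᵥ v) i) := by
  have h1 : star v ⬝ᵥ ((V * diagonal (fun i => (c i : ℂ)) * Vᴴ) *ᵥ v)
     = star (Vᴴ *ᵥ v) ⬝ᵥ (diagonal (fun i => (c i : ℂ)) *ᵥ (Vᴴ *ᵥ v)) := by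
    rw [star_mulVec, conjTranspose_conjTranspose, ← dotProduct_mulVec, mulVec_mulVec, mulVec_mulVec,
      Matrix.mul_assoc]
  rw [qf, h1]
  simp only [dotProduct, mulVec_diagonal, Complex.re_sum, Pi.star_apply]
  refine Finset.sum_congr rfl fun i _ => ?_
  simp [Complex.normSq_apply]; ring

lemma sum_normSq_unitary {V : Matrix n n ℂ} (hV : Vᴴ * V = 1) (v : n → ℂ) :
    ∑ i, Complex.normSq ((Vᴴ *ᵥ v) i) = ∑ i, Complex.normSq (v i) := by
  have hV2 : V * Vᴴ = 1 := mul_eq_one_comm.1 hV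
  have h := qf_conj_diag V (fun _ => 1) v
  have h' := qf_conj_diag (1 : Matrix n n ℂ) (fun _ => 1) v
  simp only [Complex.ofReal_one, diagonal_one, Matrix.mul_one, hV2, one_mul, conjTranspose_one,
    one_mulVec] at h h'
  rw [← h, ← h']

/-- trace against a spectral decomposition -/
lemma trace_spectral_mul (U : Matrix n n ℂ) (l : n → ℝ) (B : Matrix n n ℂ) :
    ((U * diagonal (fun i => (l i : ℂ)) * Uᴴ * B).trace).re = ∑ k, l k * qf B (U.col k) := by
  have : (U * diagonal (fun i => (l i : ℂ)) * Uᴴ * B).trace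
      = (diagonal (fun i => (l i : ℂ)) * (Uᴴ * B * U)).trace := by
    rw [Matrix.mul_assoc, Matrix.mul_assoc, Matrix.trace_mul_comm, Matrix.mul_assoc]
  rw [this, Matrix.trace, Complex.re_sum]
  refine Finset.sum_congr rfl fun k _ => ?_
  rw [diag_apply, diagonal_mul, Complex.re_ofReal_mul, qf]
  congr 2
  rw [Matrix.mul_assoc, mul_apply_eq_vecMul]
  rfl

end SIE1


section SIE2

set_option linter.unusedSectionVars false

variable {n : Type*} [Fintype n] [DecidableEq n]

lemma density_spectral {ρ : Matrix n n ℂ} (h : IsDensityMatrix ρ) :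
    ∃ (U : Matrix n n ℂ) (l : n → ℝ), Uᴴ * U = 1 ∧
      ρ = U * diagonal (fun i => (l i : ℂ)) * Uᴴ ∧ (∀ i, 0 ≤ l i) ∧ ∑ i, l i = 1 := by
  obtain ⟨U, l, hU, hρ⟩ := exists_spectral h.1.isHermitian
  refine ⟨U, l, hU, hρ, fun i => ?_, ?_⟩
  · have h1 := qf_nonneg h.1 (U.col i)
    rw [hρ, qf_conj_diag] at h1
    have h2 : Uᴴ *ᵥ U.col i = Pi.single i 1 := by
      have : Uᴴ *ᵥ U.col i = (Uᴴ * U).col i := rfl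
      rw [this, hU]; ext j; simp [Matrix.col, Matrix.one_apply, Pi.single_apply]
    rw [h2, Finset.sum_eq_single i] at h1
    · simpa using h1
    · intro b _ hb; simp [hb]
    · simp
  · have h1 := h.2
    rw [hρ, Matrix.trace_mul_comm, ← Matrix.mul_assoc, hU, Matrix.one_mul, trace_diagonal] at h1
    exact_mod_cast h1

lemma density_le_one {ρ : Matrix n n ℂ} (h : IsDensityMatrix ρ) : (1 - ρ).PosSemidef := by
  obtain ⟨U, l, hU, hρ, hl, hs⟩ := density_spectral h
  have hU2 : U * Uᴴ = 1 := mul_eq_one_comm.1 hU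
  have hl1 : ∀ i, l i ≤ 1 := fun i => by
    rw [← hs]; exact Finset.single_le_sum (fun j _ => hl j) (Finset.mem_univ i)
  have : 1 - ρ = U * diagonal (fun i => ((1 - l i : ℝ) : ℂ)) * Uᴴ := by
    have h3 : diagonal (fun i => ((1 - l i : ℝ) : ℂ))
        = (1 : Matrix n n ℂ) - diagonal (fun i => (l i : ℂ)) := by
      rw [← diagonal_one, diagonal_sub]; congr 1; ext i; simp
    rw [h3, Matrix.mul_sub, Matrix.sub_mul, ← hρ, Matrix.mul_one, hU2]
  rw [this]
  refine posSemidef_of_qf (isHermitian_conj_diag _ _) fun v => ?_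
  rw [qf_conj_diag]
  exact Finset.sum_nonneg fun i _ => mul_nonneg (by linarith [hl1 i]) (Complex.normSq_nonneg _)

lemma qf_mlog_nonpos {σ : Matrix n n ℂ} (h : IsDensityMatrix σ) (v : n → ℂ) :
    qf (mlog σ) v ≤ 0 := by
  obtain ⟨U, l, hU, hρ, hl, hs⟩ := density_spectral h
  have hl1 : ∀ i, l i ≤ 1 := fun i => by
    rw [← hs]; exact Finset.single_le_sum (fun j _ => hl j) (Finset.mem_univ i)
  rw [hρ, mlog_conj hU, qf_conj_diag]
  exact Finset.sum_nonpos fun i _ =>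
    mul_nonpos_of_nonpos_of_nonneg (Real.log_nonpos (hl i) (hl1 i)) (Complex.normSq_nonneg _)

/-- relative entropy in the eigenbasis of `ρ` -/
lemma relEntropy_eq {U : Matrix n n ℂ} (hU : Uᴴ * U = 1) (l : n → ℝ) (σ : Matrix n n ℂ) :
    relEntropy (U * diagonal (fun i => (l i : ℂ)) * Uᴴ) σ
      = ∑ k, l k * (Real.log (l k) - qf (mlog σ) (U.col k)) := by
  rw [relEntropy, trace_spectral_mul]
  refine Finset.sum_congr rfl fun k _ => ?_
  rw [qf_sub, mlog_conj hU, qf_conj_diag]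
  have h2 : Uᴴ *ᵥ U.col k = Pi.single k 1 := by
    have : Uᴴ *ᵥ U.col k = (Uᴴ * U).col k := rfl
    rw [this, hU]; ext j; simp [Matrix.col, Matrix.one_apply, Pi.single_apply]
  rw [h2, Finset.sum_eq_single k]
  · simp
  · intro b _ hb; simp [hb]
  · simp

end SIE2

section SIE2b

variable {dA dB : ℕ}

lemma sep_of_fintype {ι : Type*} [Fintype ι] (w : ι → ℝ) (σA : ι → Matrix (Fin dA) (Fin dA) ℂ)
    (σB : ι → Matrix (Fin dB) (Fin dB) ℂ) (hw : ∀ j, 0 ≤ w j) (hs : ∑ j, w j = 1)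
    (hA : ∀ j, IsDensityMatrix (σA j)) (hB : ∀ j, IsDensityMatrix (σB j)) :
    IsSeparableState (∑ j, (w j : ℂ) • (σA j ⊗ₖ σB j)) := by
  let e := (Fintype.equivFin ι).symm
  refine ⟨Fintype.card ι, w ∘ e, σA ∘ e, σB ∘ e, fun j => hw _, ?_, fun j => hA _, fun j => hB _, ?_⟩
  · rw [← hs]; exact e.sum_comp w
  · exact (e.sum_comp (fun j => (w j : ℂ) • (σA j ⊗ₖ σB j))).symm

lemma sep_convex {ι : Type*} [Fintype ι] (w : ι → ℝ)
    (σ : ι → Matrix (Fin dA × Fin dB) (Fin dA × Fin dB) ℂ) (hw : ∀ j, 0 ≤ w j)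
    (hs : ∑ j, w j = 1) (hσ : ∀ j, IsSeparableState (σ j)) :
    IsSeparableState (∑ j, (w j : ℂ) • σ j) := by
  choose k u σA σB h1 h2 h3 h4 h5 using hσ
  have := sep_of_fintype (ι := Σ j, Fin (k j)) (fun x => w x.1 * u x.1 x.2)
    (fun x => σA x.1 x.2) (fun x => σB x.1 x.2) (fun x => mul_nonneg (hw _) (h1 _ _))
    (by
      rw [Fintype.sum_sigma]
      simp only [← Finset.mul_sum, h2, mul_one, hs]) (fun x => h3 _ _) (fun x => h4 _ _)
  convert this using 1
  rw [Fintype.sum_sigma]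
  refine Finset.sum_congr rfl fun j _ => ?_
  rw [h5 j, Finset.smul_sum]
  refine Finset.sum_congr rfl fun i _ => ?_
  rw [smul_smul]; push_cast; rfl

lemma ofReal_nn {x : ℝ} (h : 0 ≤ x) : (0 : ℂ) ≤ (x : ℂ) := by exact_mod_cast h

lemma density_convex {n ι : Type*} [Fintype n] [Fintype ι] (w : ι → ℝ)
    (σ : ι → Matrix n n ℂ) (hw : ∀ j, 0 ≤ w j)
    (hs : ∑ j, w j = 1) (hσ : ∀ j, IsDensityMatrix (σ j)) :
    IsDensityMatrix (∑ j, (w j : ℂ) • σ j) := by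
  refine ⟨posSemidef_sum _ fun j _ => (hσ j).1.smul (ofReal_nn (hw j)), ?_⟩
  rw [trace_sum]
  simp only [trace_smul, (hσ _).2, smul_eq_mul, mul_one]
  exact_mod_cast hs

lemma sep_density {σ : Matrix (Fin dA × Fin dB) (Fin dA × Fin dB) ℂ} (h : IsSeparableState σ) :
    IsDensityMatrix σ := by
  obtain ⟨k, w, σA, σB, hw, hs, hA, hB, rfl⟩ := h
  refine density_convex w _ hw hs fun j => ⟨(hA j).1.kronecker (hB j).1, ?_⟩
  rw [trace_kronecker, (hA j).2, (hB j).2, one_mul]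

lemma sep_le {σ : Matrix (Fin dA × Fin dB) (Fin dA × Fin dB) ℂ} (h : IsSeparableState σ) :
    ∃ τ : Matrix (Fin dA) (Fin dA) ℂ, IsDensityMatrix τ ∧
      (τ ⊗ₖ (1 : Matrix (Fin dB) (Fin dB) ℂ) - σ).PosSemidef := by
  obtain ⟨k, w, σA, σB, hw, hs, hA, hB, rfl⟩ := h
  refine ⟨∑ j, (w j : ℂ) • σA j, density_convex w _ hw hs hA, ?_⟩
  have : (∑ j, (w j : ℂ) • σA j) ⊗ₖ (1 : Matrix (Fin dB) (Fin dB) ℂ)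
      - ∑ j, (w j : ℂ) • (σA j ⊗ₖ σB j) = ∑ j, (w j : ℂ) • (σA j ⊗ₖ (1 - σB j)) := by
    ext ⟨a, b⟩ ⟨a', b'⟩
    simp only [Matrix.sub_apply, kroneckerMap_apply, Matrix.sum_apply, Matrix.smul_apply, smul_eq_mul,
      Finset.sum_mul, ← Finset.sum_sub_distrib]
    refine Finset.sum_congr rfl fun j _ => ?_
    ring
  rw [this]
  exact posSemidef_sum _ fun j _ =>
    ((hA j).1.kronecker (density_le_one (hB j))).smul (ofReal_nn (hw j))

/-- the data of a Schmidt decomposition on the A side -/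
lemma exists_schmidtA (Ψ : Fin dA × Fin dB → ℂ) (hΨ : ∑ i, Complex.normSq (Ψ i) = 1) :
    ∃ (W : Matrix (Fin dA) (Fin dA) ℂ) (p : Fin dA → ℝ), Wᴴ * W = 1 ∧
      (Matrix.of fun a b => Ψ (a, b)) * (Matrix.of fun a b => Ψ (a, b))ᴴ
        = W * diagonal (fun i => (p i : ℂ)) * Wᴴ ∧ (∀ i, 0 ≤ p i) ∧ ∑ i, p i = 1 := by
  refine density_spectral ⟨posSemidef_self_mul_conjTranspose _, ?_⟩
  simp only [Matrix.trace, diag_apply, mul_apply, conjTranspose_apply, of_apply]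
  rw [Fintype.sum_prod_type] at hΨ
  have : ∀ z : ℂ, z * star z = (Complex.normSq z : ℂ) := fun z => Complex.mul_conj z
  simp only [this]
  exact_mod_cast hΨ

lemma unitary_row_sum {n : Type*} [Fintype n] [DecidableEq n] {G : Matrix n n ℂ}
    (h : G * Gᴴ = 1) (k : n) : ∑ i, Complex.normSq (G k i) = 1 := by
  have := congrFun (congrFun h k) k
  simp only [mul_apply, conjTranspose_apply, one_apply_eq] at this
  have h2 : ∀ z : ℂ, z * star z = (Complex.normSq z : ℂ) := fun z => Complex.mul_conj z
  simp only [h2] at this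
  exact_mod_cast this

lemma unitary_col_sum {n : Type*} [Fintype n] [DecidableEq n] {G : Matrix n n ℂ}
    (h : Gᴴ * G = 1) (k : n) : ∑ i, Complex.normSq (G i k) = 1 := by
  have := unitary_row_sum (G := Gᴴ) (by simpa using h) k
  simpa using this

lemma mul_log_sub_le {p c : ℝ} (hp : 0 ≤ p) (hc : 0 < c) :
    p * (Real.log c - Real.log p) ≤ c - p := by
  rcases hp.eq_or_lt with rfl | hp
  · simp [hc.le]
  · rw [← Real.log_div hc.ne' hp.ne']
    have := Real.log_le_sub_one_of_pos (div_pos hc hp)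
    calc p * Real.log (c / p) ≤ p * (c / p - 1) := by gcongr
      _ = c - p := by field_simp

lemma qf_mlog_kron {Ψ : Fin dA × Fin dB → ℂ}
    {W : Matrix (Fin dA) (Fin dA) ℂ} {p : Fin dA → ℝ} (hW : Wᴴ * W = 1)
    (hM : (Matrix.of fun a b => Ψ (a, b)) * (Matrix.of fun a b => Ψ (a, b))ᴴ
        = W * diagonal (fun i => (p i : ℂ)) * Wᴴ) (hp : ∀ i, 0 ≤ p i)
    {T : Matrix (Fin dA) (Fin dA) ℂ} (hT : Tᴴ * T = 1) (c : Fin dA → ℝ) (hc : ∀ i, 0 < c i) :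
    qf (mlog ((T * diagonal (fun i => (c i : ℂ)) * Tᴴ) ⊗ₖ (1 : Matrix (Fin dB) (Fin dB) ℂ))) Ψ
      ≤ ∑ i, p i * Real.log (p i) + (∑ i, c i - ∑ i, p i) := by
  have h1 : (T * diagonal (fun i => (c i : ℂ)) * Tᴴ) ⊗ₖ (1 : Matrix (Fin dB) (Fin dB) ℂ)
      = (T ⊗ₖ (1 : Matrix (Fin dB) (Fin dB) ℂ)) * diagonal (fun x : Fin dA × Fin dB => (c x.1 : ℂ))
        * (T ⊗ₖ (1 : Matrix (Fin dB) (Fin dB) ℂ))ᴴ := by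
    have : diagonal (fun x : Fin dA × Fin dB => (c x.1 : ℂ))
        = diagonal (fun i => (c i : ℂ)) ⊗ₖ (1 : Matrix (Fin dB) (Fin dB) ℂ) := by
      rw [← diagonal_one, diagonal_kronecker_diagonal]; simp
    rw [this, conjTranspose_kronecker, ← mul_kronecker_mul, ← mul_kronecker_mul]; simp
  have h2 : (T ⊗ₖ (1 : Matrix (Fin dB) (Fin dB) ℂ))ᴴ * (T ⊗ₖ (1 : Matrix (Fin dB) (Fin dB) ℂ)) = 1 := by
    rw [conjTranspose_kronecker, ← mul_kronecker_mul, hT]; simp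
  rw [h1, mlog_conj h2 (fun x : Fin dA × Fin dB => c x.1), qf_conj_diag, Fintype.sum_prod_type]
  set M : Matrix (Fin dA) (Fin dB) ℂ := Matrix.of fun a b => Ψ (a, b) with hMdef
  have h3 : ∀ k b, ((T ⊗ₖ (1 : Matrix (Fin dB) (Fin dB) ℂ))ᴴ *ᵥ Ψ) (k, b) = (Tᴴ * M) k b := by
    intro k b
    simp only [mulVec, dotProduct, Fintype.sum_prod_type, conjTranspose_apply, kroneckerMap_apply,
      mul_apply, hMdef, of_apply, one_apply]
    refine Finset.sum_congr rfl fun i _ => ?_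
    rw [Finset.sum_eq_single b]
    · simp
    · intro b' _ hb; simp [hb]
    · simp
  set G := Tᴴ * W with hG
  have hT2 : T * Tᴴ = 1 := mul_eq_one_comm.1 hT
  have hG1 : Gᴴ * G = 1 := by
    rw [hG, conjTranspose_mul, conjTranspose_conjTranspose, Matrix.mul_assoc, ← Matrix.mul_assoc T,
      hT2, Matrix.one_mul, hW]
  have hG2 : G * Gᴴ = 1 := mul_eq_one_comm.1 hG1
  have h4 : ∀ k, ∑ b, Complex.normSq ((Tᴴ * M) k b) = ∑ i, Complex.normSq (G k i) * p i := by
    intro k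
    have e1 : ((Tᴴ * M) * (Tᴴ * M)ᴴ) k k = (G * diagonal (fun i => (p i : ℂ)) * Gᴴ) k k := by
      rw [hG, conjTranspose_mul, conjTranspose_mul, conjTranspose_conjTranspose]
      simp only [Matrix.mul_assoc]
      rw [← Matrix.mul_assoc M, hM]
      simp only [Matrix.mul_assoc]
    have h2 : ∀ z : ℂ, z * star z = (Complex.normSq z : ℂ) := fun z => Complex.mul_conj z
    rw [mul_apply, mul_apply] at e1
    simp only [mul_diagonal, conjTranspose_apply, mul_right_comm _ (_ : ℂ) (star _), h2] at e1
    exact_mod_cast e1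
  have h5 : ∀ k, ∑ b, Real.log (c k) * Complex.normSq
      (((T ⊗ₖ (1 : Matrix (Fin dB) (Fin dB) ℂ))ᴴ *ᵥ Ψ) (k, b))
      = ∑ i, Complex.normSq (G k i) * (p i * Real.log (c k)) := by
    intro k
    simp only [h3, ← Finset.mul_sum, h4]
    rw [Finset.mul_sum]
    exact Finset.sum_congr rfl fun i _ => by ring
  simp only [h5]
  calc ∑ k, ∑ i, Complex.normSq (G k i) * (p i * Real.log (c k))
      ≤ ∑ k, ∑ i, Complex.normSq (G k i) * (p i * Real.log (p i) + (c k - p i)) := by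
        refine Finset.sum_le_sum fun k _ => Finset.sum_le_sum fun i _ => ?_
        refine mul_le_mul_of_nonneg_left ?_ (Complex.normSq_nonneg _)
        have := mul_log_sub_le (hp i) (hc k)
        linarith
    _ = ∑ i, p i * Real.log (p i) + (∑ i, c i - ∑ i, p i) := by
        have : ∀ k i, Complex.normSq (G k i) * (p i * Real.log (p i) + (c k - p i))
          = Complex.normSq (G k i) * (p i * Real.log (p i)) + (Complex.normSq (G k i) * c k
            - Complex.normSq (G k i) * p i) := fun k i => by ring
        simp only [this, Finset.sum_add_distrib, Finset.sum_sub_distrib]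
        rw [Finset.sum_comm, Finset.sum_comm (f := fun k i => Complex.normSq (G k i) * p i)]
        simp only [← Finset.sum_mul, unitary_row_sum hG2, unitary_col_sum hG1, one_mul]

lemma relEntropy_pure {n : Type*} [Fintype n] [DecidableEq n] {Ψ : n → ℂ}
    (hΨ : ∑ i, Complex.normSq (Ψ i) = 1) (σ : Matrix n n ℂ) :
    relEntropy (vecMulVec Ψ (star Ψ)) σ = - qf (mlog σ) Ψ := by
  have htr : ∀ B : Matrix n n ℂ, (vecMulVec Ψ (star Ψ) * B).trace = star Ψ ⬝ᵥ (B *ᵥ Ψ) := by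
    intro B
    rw [Matrix.trace_mul_comm, Matrix.mul_vecMulVec, trace_vecMulVec, dotProduct_comm]
  have hd : star Ψ ⬝ᵥ Ψ = 1 := by
    have h2 : ∀ z : ℂ, star z * z = (Complex.normSq z : ℂ) := fun z => by
      rw [mul_comm]; exact Complex.mul_conj z
    simp only [dotProduct, Pi.star_apply, h2]
    exact_mod_cast hΨ
  have hH : (vecMulVec Ψ (star Ψ)).IsHermitian := (posSemidef_vecMulVec_self_star Ψ).isHermitian
  have h1 : vecMulVec Ψ (star Ψ) *ᵥ Ψ = ((1 : ℝ) : ℂ) • Ψ := by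
    rw [vecMulVec_mulVec, hd]; ext i; simp
  have h2 := mlog_mulVec hH h1
  rw [relEntropy, htr, ← qf, qf_sub]
  simp [qf, h2]

/-- lower bound: relative entropy of a pure state to a separable one is at least the entropy. -/
lemma relEntropy_pure_ge {Ψ : Fin dA × Fin dB → ℂ} (hΨ : ∑ i, Complex.normSq (Ψ i) = 1)
    {W : Matrix (Fin dA) (Fin dA) ℂ} {p : Fin dA → ℝ} (hW : Wᴴ * W = 1)
    (hM : (Matrix.of fun a b => Ψ (a, b)) * (Matrix.of fun a b => Ψ (a, b))ᴴ
        = W * diagonal (fun i => (p i : ℂ)) * Wᴴ) (hp : ∀ i, 0 ≤ p i) (hp1 : ∑ i, p i = 1)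
    {σ : Matrix (Fin dA × Fin dB) (Fin dA × Fin dB) ℂ} (hσ : IsSeparableState σ)
    (hs : SuppLE (vecMulVec Ψ (star Ψ)) σ) :
    - ∑ i, p i * Real.log (p i) ≤ relEntropy (vecMulVec Ψ (star Ψ)) σ := by
  rw [relEntropy_pure hΨ]
  obtain ⟨τ, hτ, hle⟩ := sep_le hσ
  have key : ∀ η : ℝ, 0 < η → qf (mlog σ) Ψ ≤ ∑ i, p i * Real.log (p i) + η * dA := by
    intro η hη
    obtain ⟨U, l, hU, hσU, hl, -⟩ := density_spectral (sep_density hσ)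
    obtain ⟨T, c, hT, hτT, hc, hc1⟩ := density_spectral hτ
    have hU2 : U * Uᴴ = 1 := mul_eq_one_comm.1 hU
    have hT2 : T * Tᴴ = 1 := mul_eq_one_comm.1 hT
    have e1 : σ + (η : ℂ) • 1 = U * diagonal (fun i => ((l i + η : ℝ) : ℂ)) * Uᴴ := by
      have h3 : diagonal (fun i => ((l i + η : ℝ) : ℂ))
          = diagonal (fun i => (l i : ℂ)) + (η : ℂ) • (1 : Matrix (Fin dA × Fin dB) (Fin dA × Fin dB) ℂ) := by
        rw [smul_one_eq_diagonal, diagonal_add]; congr 1; ext i; simp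
      rw [h3, Matrix.mul_add, Matrix.add_mul, ← hσU, Matrix.mul_smul, Matrix.smul_mul,
        Matrix.mul_one, hU2]
    have e2 : τ + (η : ℂ) • 1 = T * diagonal (fun i => ((c i + η : ℝ) : ℂ)) * Tᴴ := by
      have h3 : diagonal (fun i => ((c i + η : ℝ) : ℂ))
          = diagonal (fun i => (c i : ℂ)) + (η : ℂ) • (1 : Matrix (Fin dA) (Fin dA) ℂ) := by
        rw [smul_one_eq_diagonal, diagonal_add]; congr 1; ext i; simp
      rw [h3, Matrix.mul_add, Matrix.add_mul, ← hτT, Matrix.mul_smul, Matrix.smul_mul,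
        Matrix.mul_one, hT2]
    have s1 : qf (mlog σ) Ψ ≤ qf (mlog (σ + (η : ℂ) • 1)) Ψ := by
      rw [e1, mlog_conj hU]
      conv_lhs => rw [hσU]
      rw [mlog_conj hU, qf_conj_diag, qf_conj_diag]
      refine Finset.sum_le_sum fun k _ => ?_
      rcases (hl k).eq_or_lt with h0 | h0
      · have : σ *ᵥ U.col k = 0 := by
          have hAV : σ * U = U * diagonal (fun i => (l i : ℂ)) := by
            conv_lhs => rw [hσU]
            rw [Matrix.mul_assoc, hU, Matrix.mul_one]
          ext j
          have := congrFun (congrFun hAV j) k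
          rw [mul_diagonal, ← h0, Complex.ofReal_zero, mul_zero] at this
          exact this
        have h5 := hs _ this
        rw [vecMulVec_mulVec] at h5
        have h6 : star Ψ ⬝ᵥ U.col k = 0 := by
          by_contra hne
          have : Ψ = 0 := by
            ext i
            have := congrFun h5 i
            simpa [hne] using this
          simp [this] at hΨ
        have h7 : (Uᴴ *ᵥ Ψ) k = 0 := by
          have : (Uᴴ *ᵥ Ψ) k = star (star Ψ ⬝ᵥ U.col k) := by
            simp [mulVec, dotProduct, mul_comm]
          rw [this, h6, star_zero]
        simp [h7]
      · refine mul_le_mul_of_nonneg_right ?_ (Complex.normSq_nonneg _)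
        exact Real.log_le_log h0 (by linarith)
    have hpd : (σ + (η : ℂ) • 1).PosDef := by
      refine PosDef.posSemidef_add (sep_density hσ).1 (PosDef.one.smul ?_)
      exact_mod_cast hη
    have s2 : qf (mlog (σ + (η : ℂ) • 1)) Ψ ≤
        qf (mlog ((τ + (η : ℂ) • 1) ⊗ₖ (1 : Matrix (Fin dB) (Fin dB) ℂ))) Ψ := by
      refine qf_mlog_mono hpd ?_ Ψ
      convert hle using 1
      rw [add_kronecker, smul_kronecker, one_kronecker_one]; abel
    have s3 := qf_mlog_kron hW hM hp hT (fun i => c i + η) (fun i => by linarith [hc i])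
    rw [← e2] at s3
    have s4 : ∑ i, (c i + η) - ∑ i, p i = η * dA := by
      rw [Finset.sum_add_distrib, hc1, hp1]; simp [mul_comm]
    rw [s4] at s3
    linarith
  have : qf (mlog σ) Ψ ≤ ∑ i, p i * Real.log (p i) := by
    refine le_of_forall_pos_le_add fun ε hε => ?_
    have h1 := key (ε / (dA + 1)) (by positivity)
    have h2 : ε / (dA + 1) * dA ≤ ε := by
      rw [div_mul_eq_mul_div, div_le_iff₀ (by positivity)]; nlinarith
    linarith
  linarith

end SIE2b


section SIE3

variable {dA dB : ℕ}

lemma star_mul_self_normSq (z : ℂ) : star z * z = (Complex.normSq z : ℂ) := by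
  rw [mul_comm]; exact Complex.mul_conj z

lemma mul_star_self_normSq (z : ℂ) : z * star z = (Complex.normSq z : ℂ) := Complex.mul_conj z

lemma qf_vecMulVec {n : Type*} [Fintype n] (v x : n → ℂ) :
    qf (vecMulVec v (star v)) x = Complex.normSq (star v ⬝ᵥ x) := by
  rw [qf, vecMulVec_mulVec]
  have star_dotProduct_comm_aux : star (star v ⬝ᵥ x) = star x ⬝ᵥ v := by
    simp [dotProduct, mul_comm]
  have : star x ⬝ᵥ (MulOpposite.op (star v ⬝ᵥ x) • v) = (Complex.normSq (star v ⬝ᵥ x) : ℂ) := by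
    rw [← mul_star_self_normSq, star_dotProduct_comm_aux]
    simp [dotProduct_smul, mul_comm]
  rw [this, Complex.ofReal_re]

lemma exists_density_of_vec {n : Type*} [Fintype n] [DecidableEq n] [Nonempty n] (α : n → ℂ) :
    ∃ τ : Matrix n n ℂ, IsDensityMatrix τ ∧
      vecMulVec α (star α) = ((∑ i, Complex.normSq (α i) : ℝ) : ℂ) • τ := by
  have tr : ∀ β : n → ℂ, (vecMulVec β (star β)).trace = ((∑ i, Complex.normSq (β i) : ℝ) : ℂ) := by
    intro β
    rw [trace_vecMulVec]
    simp only [dotProduct, Pi.star_apply, mul_star_self_normSq]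
    push_cast; rfl
  by_cases h : ∑ i, Complex.normSq (α i) = 0
  · obtain ⟨i0⟩ := ‹Nonempty n›
    refine ⟨vecMulVec (Pi.single i0 1) (star (Pi.single i0 1)),
      ⟨posSemidef_vecMulVec_self_star _, ?_⟩, ?_⟩
    · rw [tr, Finset.sum_eq_single i0]
      · simp
      · intro b _ hb; simp [hb]
      · simp
    · have : α = 0 := by
        ext i
        have := (Finset.sum_eq_zero_iff_of_nonneg (fun i _ => Complex.normSq_nonneg (α i))).1 h i
          (Finset.mem_univ i)
        simpa using this
      rw [h, this]; simp
  · refine ⟨(((∑ i, Complex.normSq (α i))⁻¹ : ℝ) : ℂ) • vecMulVec α (star α), ⟨?_, ?_⟩, ?_⟩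
    · exact (posSemidef_vecMulVec_self_star _).smul (ofReal_nn (inv_nonneg.2
        (Finset.sum_nonneg fun i _ => Complex.normSq_nonneg _)))
    · rw [trace_smul, tr, smul_eq_mul, ← Complex.ofReal_mul, inv_mul_cancel₀ h, Complex.ofReal_one]
    · rw [smul_smul, ← Complex.ofReal_mul, mul_inv_cancel₀ h]; simp

/-- weighted sums of product pure states are separable -/
lemma sep_of_vec [Nonempty (Fin dA)] [Nonempty (Fin dB)] {ι : Type*} [Fintype ι] (w : ι → ℝ)
    (α : ι → Fin dA → ℂ) (β : ι → Fin dB → ℂ) (u : ι → Fin dA × Fin dB → ℂ)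
    (hu : ∀ j x, u j x = α j x.1 * β j x.2)
    (hw : ∀ j, 0 ≤ w j) (hs : ∑ j, w j * ∑ x, Complex.normSq (u j x) = 1) :
    IsSeparableState (∑ j, (w j : ℂ) • vecMulVec (u j) (star (u j))) := by
  choose τA hA1 hA2 using fun j => exists_density_of_vec (α j)
  choose τB hB1 hB2 using fun j => exists_density_of_vec (β j)
  have hn : ∀ j, ∑ x, Complex.normSq (u j x)
      = (∑ i, Complex.normSq (α j i)) * ∑ i, Complex.normSq (β j i) := by
    intro j
    simp only [hu, Complex.normSq_mul, Fintype.sum_prod_type, Finset.sum_mul_sum]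
  have := sep_of_fintype (fun j => w j * ∑ x, Complex.normSq (u j x)) τA τB
    (fun j => mul_nonneg (hw j) (Finset.sum_nonneg fun x _ => Complex.normSq_nonneg _)) hs hA1 hB1
  convert this using 2 with j
  have e : vecMulVec (u j) (star (u j))
      = vecMulVec (α j) (star (α j)) ⊗ₖ vecMulVec (β j) (star (β j)) := by
    ext ⟨a, b⟩ ⟨a', b'⟩
    simp only [vecMulVec_apply, kroneckerMap_apply, Pi.star_apply, hu, star_mul']
    ring
  rw [e, hA2, hB2, smul_kronecker, kronecker_smul, smul_smul, smul_smul, hn]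
  push_cast; ring_nf

lemma card_smul_sum_sub {n ι : Type*} [Fintype n] [DecidableEq n] [Fintype ι] (u : ι → n → ℂ) :
    (((Fintype.card ι : ℝ) : ℂ) • ∑ j, vecMulVec (u j) (star (u j))
      - vecMulVec (∑ j, u j) (star (∑ j, u j))).PosSemidef := by
  have hs : (∑ j, vecMulVec (u j) (star (u j))).PosSemidef :=
    posSemidef_sum _ fun j _ => posSemidef_vecMulVec_self_star _
  have hc : (0:ℂ) ≤ ((Fintype.card ι : ℝ) : ℂ) := ofReal_nn (by positivity)
  refine posSemidef_of_qf ((hs.smul hc).isHermitian.sub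
    (posSemidef_vecMulVec_self_star _).isHermitian) fun x => ?_
  have h1 : qf (∑ j, vecMulVec (u j) (star (u j))) x = ∑ j, Complex.normSq (star (u j) ⬝ᵥ x) := by
    simp only [← qf_vecMulVec]
    simp only [qf, sum_mulVec, dotProduct_sum, Complex.re_sum]
  rw [qf_sub, qf_smul, h1, qf_vecMulVec]
  have h2 : star (∑ j, u j) ⬝ᵥ x = ∑ j, star (u j) ⬝ᵥ x := by
    rw [star_sum, sum_dotProduct]
  rw [h2]
  simp only [Complex.normSq_eq_norm_sq]
  have h3 : ‖∑ j, star (u j) ⬝ᵥ x‖ ^ 2 ≤ (∑ j, ‖star (u j) ⬝ᵥ x‖) ^ 2 := by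
    gcongr; exact norm_sum_le _ _
  have h4 := sq_sum_le_card_mul_sum_sq (s := (Finset.univ : Finset ι))
    (f := fun j => ‖star (u j) ⬝ᵥ x‖)
  rw [Finset.card_univ] at h4
  linarith

/-- every pure state is dominated by `d` times a separable one -/
lemma exists_sep_dominating [Nonempty (Fin dA)] [Nonempty (Fin dB)] (φ : Fin dA × Fin dB → ℂ)
    (hφ : ∑ i, Complex.normSq (φ i) = 1) :
    ∃ σ, IsSeparableState σ ∧
      ((((min dA dB : ℕ) : ℝ) : ℂ) • σ - vecMulVec φ (star φ)).PosSemidef := by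
  rcases le_total dA dB with h | h
  · rw [min_eq_left h]
    let u : Fin dA → Fin dA × Fin dB → ℂ := fun j x => (Pi.single j 1 : Fin dA → ℂ) x.1 * φ (j, x.2)
    have hu : ∑ j, u j = φ := by
      ext ⟨a, b⟩
      simp [u, Finset.sum_apply, Pi.single_apply]
    have h1 := sep_of_vec (ι := Fin dA) (fun _ => 1) (fun j => Pi.single j 1) (fun j b => φ (j, b))
      u (fun j x => rfl) (fun _ => zero_le_one) (by
        refine Eq.trans ?_ hφ
        simp [u, Fintype.sum_prod_type, Pi.single_apply, apply_ite])
    have h2 := card_smul_sum_sub u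
    rw [hu, Fintype.card_fin] at h2
    refine ⟨_, h1, ?_⟩
    simpa using h2
  · rw [min_eq_right h]
    let u : Fin dB → Fin dA × Fin dB → ℂ := fun j x => φ (x.1, j) * (Pi.single j 1 : Fin dB → ℂ) x.2
    have hu : ∑ j, u j = φ := by
      ext ⟨a, b⟩
      simp [u, Finset.sum_apply, Pi.single_apply]
    have h1 := sep_of_vec (ι := Fin dB) (fun _ => 1) (fun j a => φ (a, j)) (fun j => Pi.single j 1)
      u (fun j x => rfl) (fun _ => zero_le_one) (by
        refine Eq.trans ?_ hφ
        simp [u, Fintype.sum_prod_type_right, Pi.single_apply, apply_ite])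
    have h2 := card_smul_sum_sub u
    rw [hu, Fintype.card_fin] at h2
    refine ⟨_, h1, ?_⟩
    simpa using h2

/-- complete a vector to an orthonormal basis -/
lemma exists_unitary_col {d : ℕ} (v : Fin d → ℂ) (j0 : Fin d) :
    ∃ B : Matrix (Fin d) (Fin d) ℂ, Bᴴ * B = 1 ∧
      ∀ b, v b = ((Real.sqrt (∑ i, Complex.normSq (v i)) : ℝ) : ℂ) * B b j0 := by
  by_cases h : ∑ i, Complex.normSq (v i) = 0
  · refine ⟨1, by simp, fun b => ?_⟩
    have := (Finset.sum_eq_zero_iff_of_nonneg (fun i _ => Complex.normSq_nonneg (v i))).1 h b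
          (Finset.mem_univ b)
    rw [h, Complex.normSq_eq_zero.1 this]; simp
  · set r := Real.sqrt (∑ i, Complex.normSq (v i)) with hr
    have hpos : 0 < ∑ i, Complex.normSq (v i) :=
      lt_of_le_of_ne (Finset.sum_nonneg fun i _ => Complex.normSq_nonneg _) (Ne.symm h)
    have hr0 : 0 < r := Real.sqrt_pos.2 hpos
    let e : EuclideanSpace ℂ (Fin d) := WithLp.toLp 2 (fun b => (r : ℂ)⁻¹ * v b)
    have he : ‖e‖ = 1 := by
      rw [EuclideanSpace.norm_eq, Real.sqrt_eq_one]
      simp only [e, norm_mul, mul_pow, ← Complex.normSq_eq_norm_sq, ← Finset.mul_sum]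
      rw [Complex.normSq_eq_norm_sq, norm_inv, Complex.norm_real, inv_pow, Real.norm_eq_abs, sq_abs, hr,
        Real.sq_sqrt hpos.le, inv_mul_cancel₀ h]
    obtain ⟨b, hb⟩ := Orthonormal.exists_orthonormalBasis_extension_of_card_eq (𝕜 := ℂ)
      (E := EuclideanSpace ℂ (Fin d)) (ι := Fin d) (by simp) (v := fun _ => e) (s := {j0})
      (by
        rw [orthonormal_iff_ite]
        rintro ⟨i, hi⟩ ⟨j, hj⟩
        rw [Set.mem_singleton_iff] at hi hj
        subst hi; subst hj
        simp [Set.domRestrict_apply, he, inner_self_eq_norm_sq_to_K])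
    have hb0 := hb j0 rfl
    refine ⟨Matrix.of fun i j => b j i, ?_, fun i => ?_⟩
    · ext i j
      have := orthonormal_iff_ite.1 b.orthonormal i j
      rw [mul_apply, one_apply, ← this, PiLp.inner_apply]
      refine Finset.sum_congr rfl fun k _ => ?_
      simp [mul_comm]
    · have : (b j0) i = (r : ℂ)⁻¹ * v i := by rw [hb0]
      rw [of_apply, this, mul_inv_cancel_left₀]
      exact_mod_cast hr0.ne'

/-- a product basis adapted to `Ψ` -/
lemma exists_adapted {Ψ : Fin dA × Fin dB → ℂ}
    {W : Matrix (Fin dA) (Fin dA) ℂ} {p : Fin dA → ℝ} (hW : Wᴴ * W = 1)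
    (hM : (Matrix.of fun a b => Ψ (a, b)) * (Matrix.of fun a b => Ψ (a, b))ᴴ
        = W * diagonal (fun i => (p i : ℂ)) * Wᴴ) (j0 : Fin dB) :
    Fintype.card {i // p i ≠ 0} ≤ min dA dB ∧
    ∃ (V : Matrix (Fin dA × Fin dB) (Fin dA × Fin dB) ℂ) (B : Fin dA → Matrix (Fin dB) (Fin dB) ℂ),
      Vᴴ * V = 1 ∧ (∀ x y, V x y = W x.1 y.1 * B y.1 x.2 y.2) ∧
      ∀ i j, (Vᴴ *ᵥ Ψ) (i, j) = if j = j0 then ((Real.sqrt (p i) : ℝ) : ℂ) else 0 := by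
  set M : Matrix (Fin dA) (Fin dB) ℂ := Matrix.of fun a b => Ψ (a, b) with hMdef
  set N := Wᴴ * M with hN
  have hNN : N * Nᴴ = diagonal (fun i => (p i : ℂ)) := by
    rw [hN, conjTranspose_mul, conjTranspose_conjTranspose, Matrix.mul_assoc, ← Matrix.mul_assoc M,
      hM]
    simp only [Matrix.mul_assoc, hW, Matrix.mul_one]
    rw [← Matrix.mul_assoc, hW, Matrix.one_mul]
  have hpN : ∀ i, ∑ b, Complex.normSq (N i b) = p i := by
    intro i
    have := congrFun (congrFun hNN i) i
    rw [mul_apply, diagonal_apply_eq] at this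
    simp only [conjTranspose_apply, mul_star_self_normSq] at this
    exact_mod_cast this
  constructor
  · refine le_min ?_ ?_
    · simpa using Fintype.card_subtype_le (fun i : Fin dA => p i ≠ 0)
    · have h1 : (N * Nᴴ).rank ≤ dB := (rank_mul_le_left _ _).trans (by simpa using N.rank_le_width)
      rw [hNN, rank_diagonal] at h1
      simpa using h1
  · choose B hB1 hB2 using fun i => exists_unitary_col (N i) j0
    refine ⟨Matrix.of fun x y => W x.1 y.1 * B y.1 x.2 y.2, B, ?_, fun x y => rfl, ?_⟩
    · ext ⟨i, j⟩ ⟨i', j'⟩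
      have h1 : ((Matrix.of fun (x y : Fin dA × Fin dB) => W x.1 y.1 * B y.1 x.2 y.2)ᴴ *
          (Matrix.of fun (x y : Fin dA × Fin dB) => W x.1 y.1 * B y.1 x.2 y.2)) (i, j) (i', j')
          = (Wᴴ * W) i i' * ((B i)ᴴ * B i') j j' := by
        simp only [mul_apply, Fintype.sum_prod_type, conjTranspose_apply, of_apply,
          Finset.sum_mul_sum, star_mul']
        refine Finset.sum_congr rfl fun a _ => Finset.sum_congr rfl fun b _ => ?_
        ring
      rw [h1, hW]
      by_cases hi : i = i'
      · subst hi; rw [hB1]; simp [one_apply]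
      · simp [one_apply, hi]
    · intro i j
      have h1 : ((Matrix.of fun (x y : Fin dA × Fin dB) => W x.1 y.1 * B y.1 x.2 y.2)ᴴ *ᵥ Ψ) (i, j)
          = ∑ b, star (B i b j) * N i b := by
        simp only [mulVec, dotProduct, Fintype.sum_prod_type, conjTranspose_apply, of_apply, hN,
          mul_apply, hMdef, Finset.mul_sum, star_mul']
        rw [Finset.sum_comm]
        refine Finset.sum_congr rfl fun a _ => Finset.sum_congr rfl fun b _ => ?_
        ring
      have h2 : ∑ b, star (B i b j) * N i b
          = ((Real.sqrt (p i) : ℝ) : ℂ) * ((B i)ᴴ * B i) j j0 := by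
        rw [mul_apply, Finset.mul_sum]
        refine Finset.sum_congr rfl fun b _ => ?_
        rw [hB2 i b, hpN, conjTranspose_apply]; ring
      rw [h1, h2, hB1, one_apply]
      simp

end SIE3


section SIE4

lemma log_le_368 {x : ℝ} (hx : 0 < x) : Real.log x ≤ 0.368 * x := by
  have h1 := Real.log_le_sub_one_of_pos (x := 0.368 * x) (by positivity)
  rw [Real.log_mul (by norm_num) hx.ne'] at h1
  have h2 : -1 ≤ Real.log (0.368:ℝ) := by
    rw [Real.le_log_iff_exp_le (by norm_num), Real.exp_neg]
    have := Real.exp_one_gt_d9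
    rw [inv_le_comm₀ (by positivity) (by norm_num)]
    norm_num at this ⊢; linarith
  linarith

lemma p_log_sq_le {p : ℝ} {d : ℕ} (hd : 2 ≤ d) (hp : 0 < p) (hp1 : p ≤ 1) :
    p * Real.log p ^ 2 ≤ Real.log d ^ 2 * p + (d:ℝ)⁻¹ * (0.736 * Real.log d + 0.542) := by
  have hd0 : (0:ℝ) < d := by positivity
  have hl : 0 ≤ Real.log d := Real.log_natCast_nonneg d
  have hlp : Real.log p ≤ 0 := Real.log_nonpos hp.le hp1
  rcases le_total 1 (p * d) with h | h
  · have h1 : 0 ≤ Real.log (p * d) := Real.log_nonneg h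
    rw [Real.log_mul hp.ne' hd0.ne'] at h1
    have h2 : Real.log p ^ 2 ≤ Real.log d ^ 2 := sq_le_sq' (by linarith) (by linarith)
    have : 0 ≤ (d:ℝ)⁻¹ * (0.736 * Real.log d + 0.542) := by positivity
    nlinarith
  · set u := p * d with hu
    have hu0 : 0 < u := by positivity
    have hpu : p = u * (d:ℝ)⁻¹ := by rw [hu]; field_simp
    have hlog : Real.log p = Real.log u - Real.log d := by
      rw [hu, Real.log_mul hp.ne' hd0.ne']; ring
    have h1 : u * (-Real.log u) ≤ 0.368 := by
      have := log_le_368 (inv_pos.2 hu0)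
      rw [Real.log_inv] at this
      calc u * (-Real.log u) ≤ u * (0.368 * u⁻¹) := by gcongr
        _ = 0.368 := by field_simp
    have h0 : Real.log u ≤ 0 := Real.log_nonpos hu0.le h
    have h2 : u * (Real.log u)^2 ≤ 0.542 := by
      have hs : 0 < Real.sqrt u := Real.sqrt_pos.2 hu0
      have := log_le_368 (inv_pos.2 hs)
      rw [Real.log_inv, Real.log_sqrt hu0.le] at this
      have h3 : (-Real.log u)^2 ≤ (0.736 * (Real.sqrt u)⁻¹)^2 := by
        apply pow_le_pow_left₀ <;> linarith
      have h4 : u * (0.736 * (Real.sqrt u)⁻¹)^2 = 0.736^2 := by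
        rw [mul_pow, inv_pow, Real.sq_sqrt hu0.le]; field_simp
      nlinarith
    have : u * (Real.log u - Real.log d)^2 ≤ Real.log d ^ 2 * u + (0.736 * Real.log d + 0.542) := by
      nlinarith
    calc p * Real.log p ^ 2 = (d:ℝ)⁻¹ * (u * (Real.log u - Real.log d)^2) := by
          rw [hlog]; nth_rewrite 1 [hpu]; ring
      _ ≤ (d:ℝ)⁻¹ * (Real.log d ^ 2 * u + (0.736 * Real.log d + 0.542)) := by gcongr
      _ = _ := by nth_rewrite 1 [hpu]; ring

lemma sum_p_log_sq {ι : Type*} [Fintype ι] (p : ι → ℝ) (hp : ∀ i, 0 ≤ p i) (hp1 : ∑ i, p i = 1)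
    {d : ℕ} (hd : Fintype.card {i // p i ≠ 0} ≤ d) :
    ∑ i, p i * Real.log (p i) ^ 2 ≤ 4 * Real.log d ^ 2 := by
  classical
  have hle : ∀ i, p i ≤ 1 := fun i => by
    rw [← hp1]; exact Finset.single_le_sum (fun j _ => hp j) (Finset.mem_univ i)
  rcases lt_or_ge d 2 with h | h
  · have hsub : Subsingleton {i // p i ≠ 0} := Fintype.card_le_one_iff_subsingleton.1 (by omega)
    have : ∀ i, p i * Real.log (p i) ^ 2 = 0 := by
      intro i
      by_cases hi : p i = 0
      · simp [hi]
      · have : p i = 1 := by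
          rw [← hp1]; symm
          apply Finset.sum_eq_single i
          · intro j _ hj
            by_contra hj0
            exact hj (congrArg Subtype.val (hsub.elim ⟨j, hj0⟩ ⟨i, hi⟩))
          · simp
        simp [this]
    simp only [this, Finset.sum_const_zero]; positivity
  · have hd0 : (0:ℝ) < d := by positivity
    have hl : Real.log 2 ≤ Real.log d := Real.log_le_log (by norm_num) (by exact_mod_cast h)
    have hl2 := Real.log_two_gt_d9
    set K := (d:ℝ)⁻¹ * (0.736 * Real.log d + 0.542) with hK
    have hK0 : 0 ≤ K := by rw [hK]; apply mul_nonneg <;> [positivity; linarith]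
    have h1 : ∀ i, p i * Real.log (p i) ^ 2 ≤ Real.log d ^ 2 * p i + if p i ≠ 0 then K else 0 := by
      intro i
      by_cases hi : p i = 0
      · simp [hi]
      · rw [if_pos hi]
        exact p_log_sq_le h (lt_of_le_of_ne (hp i) (Ne.symm hi)) (hle i)
    calc _ ≤ ∑ i, (Real.log d ^ 2 * p i + if p i ≠ 0 then K else 0) := Finset.sum_le_sum fun i _ => h1 i
      _ = Real.log d ^ 2 + (Fintype.card {i // p i ≠ 0}) * K := by
        rw [Finset.sum_add_distrib, ← Finset.mul_sum, hp1, ← Finset.sum_filter, Finset.sum_const,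
          Fintype.card_subtype]; simp
      _ ≤ Real.log d ^ 2 + d * K := by gcongr
      _ = Real.log d ^ 2 + (0.736 * Real.log d + 0.542) := by rw [hK]; field_simp
      _ ≤ _ := by nlinarith

/-- classical perturbation bound -/
lemma classical_bound {ι : Type*} [Fintype ι] [Nonempty ι] (x y : ι → ℝ)
    (hy : ∀ n, 0 ≤ y n) (hx1 : ∑ n, x n ^ 2 = 1) (hy1 : ∑ n, y n ^ 2 = 1)
    {s δ : ℝ} (hs : 0 < s) (hs1 : s < 1) (hδ : ∑ n, (x n - y n) ^ 2 ≤ δ) :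
    ∑ n, -Real.log ((1 - s) * y n ^ 2 + s / Fintype.card ι) * x n ^ 2
      ≤ -Real.log (1 - s) - ∑ n, y n ^ 2 * Real.log (y n ^ 2)
        + 2 * (Real.sqrt δ * Real.sqrt (∑ n, y n ^ 2 * Real.log (y n ^ 2) ^ 2))
        + δ * ((∑ n, -Real.log (y n ^ 2)) + Real.log (Fintype.card ι / s)) := by
  set D : ℝ := (Fintype.card ι : ℝ) with hD
  have hD1 : 1 ≤ D := by rw [hD]; exact_mod_cast Fintype.card_pos
  have hyle : ∀ n, y n ^ 2 ≤ 1 := fun n => by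
    rw [← hy1]; exact Finset.single_le_sum (fun j _ => sq_nonneg (y j)) (Finset.mem_univ n)
  have hh : ∀ n, 0 ≤ -Real.log (y n ^ 2) := fun n =>
    neg_nonneg.2 (Real.log_nonpos (sq_nonneg _) (hyle n))
  have hlD : 0 ≤ Real.log (D / s) := Real.log_nonneg (by rw [le_div_iff₀ hs]; linarith)
  set M := ∑ n, -Real.log (y n ^ 2) with hM
  have hhM : ∀ n, -Real.log (y n ^ 2) ≤ M := fun n =>
    Finset.single_le_sum (f := fun n => -Real.log (y n ^ 2)) (fun j _ => hh j) (Finset.mem_univ n)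
  have hM0 : 0 ≤ M := Finset.sum_nonneg fun j _ => hh j
  have hl1 : 0 ≤ -Real.log (1 - s) := neg_nonneg.2 (Real.log_nonpos (by linarith) (by linarith))
  have hsD : 0 < s / D := by positivity
  have key : ∀ n, -Real.log ((1 - s) * y n ^ 2 + s / D) * x n ^ 2 ≤
      -Real.log (1 - s) * x n ^ 2 - y n ^ 2 * Real.log (y n ^ 2)
      + 2 * ((x n - y n) * (y n * (-Real.log (y n ^ 2)))) + (M + Real.log (D / s)) * (x n - y n)^2 := by
    intro n
    rcases (hy n).eq_or_lt with h | h
    · rw [← h]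
      have : -Real.log (s / D) = Real.log (D / s) := by rw [← Real.log_inv, inv_div]
      simp only [ne_eq, OfNat.ofNat_ne_zero, not_false_eq_true, zero_pow, mul_zero, zero_add, sub_zero,
        this, zero_mul, add_zero]
      have h1 := mul_nonneg hl1 (sq_nonneg (x n))
      have h2 := mul_nonneg hM0 (sq_nonneg (x n))
      linarith
    · have hpos : 0 < y n ^ 2 := by positivity
      have h1 : -Real.log ((1 - s) * y n ^ 2 + s / D) ≤ -Real.log (1 - s) - Real.log (y n ^ 2) := by
        have : Real.log ((1 - s) * y n ^ 2) ≤ Real.log ((1 - s) * y n ^ 2 + s / D) :=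
          Real.log_le_log (by have : 0 < 1 - s := by linarith
                              positivity) (by linarith)
        rw [Real.log_mul (by linarith) hpos.ne'] at this
        linarith
      have h2 := mul_le_mul_of_nonneg_right h1 (sq_nonneg (x n))
      have h3 := mul_le_mul_of_nonneg_right (hhM n) (sq_nonneg (x n - y n))
      have h4 := mul_nonneg hlD (sq_nonneg (x n - y n))
      nlinarith
  have hcs : ∑ n, (x n - y n) * (y n * (-Real.log (y n ^ 2))) ≤
      Real.sqrt δ * Real.sqrt (∑ n, y n ^ 2 * Real.log (y n ^ 2) ^ 2) := by
    refine (Real.sum_mul_le_sqrt_mul_sqrt _ _ _).trans ?_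
    have : ∀ n, (y n * (-Real.log (y n ^ 2)))^2 = y n ^ 2 * Real.log (y n ^ 2) ^ 2 := fun n => by ring
    simp only [this]
    gcongr
  calc _ ≤ ∑ n, (-Real.log (1 - s) * x n ^ 2 - y n ^ 2 * Real.log (y n ^ 2)
      + 2 * ((x n - y n) * (y n * (-Real.log (y n ^ 2)))) + (M + Real.log (D / s)) * (x n - y n)^2) :=
        Finset.sum_le_sum fun n _ => key n
    _ = -Real.log (1 - s) - ∑ n, y n ^ 2 * Real.log (y n ^ 2)
        + 2 * ∑ n, (x n - y n) * (y n * (-Real.log (y n ^ 2)))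
        + (M + Real.log (D / s)) * ∑ n, (x n - y n)^2 := by
      simp only [Finset.sum_add_distrib, Finset.sum_sub_distrib, ← Finset.mul_sum, hx1, mul_one]
    _ ≤ _ := by
      have := mul_le_mul_of_nonneg_left hδ (add_nonneg hM0 hlD)
      linarith

end SIE4


section SIE5

lemma unitary_mulVec_col {n : Type*} [Fintype n] [DecidableEq n] {U : Matrix n n ℂ}
    (hU : Uᴴ * U = 1) (k : n) : Uᴴ *ᵥ U.col k = Pi.single k 1 := by
  have : Uᴴ *ᵥ U.col k = (Uᴴ * U).col k := rfl
  rw [this, hU]; ext j; simp [Matrix.col, Matrix.one_apply, Pi.single_apply]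

/-- dominant eigenvector -/
lemma dominant_eigenvector {n : Type*} [Fintype n] [DecidableEq n] {U : Matrix n n ℂ}
    (hU : Uᴴ * U = 1) {l : n → ℝ} (hl : ∀ i, 0 ≤ l i) (hl1 : ∑ i, l i = 1)
    {Ψ : n → ℂ} (hΨ : ∑ i, Complex.normSq (Ψ i) = 1) {ρ : Matrix n n ℂ}
    (hρ : ρ = U * diagonal (fun i => (l i : ℂ)) * Uᴴ) {a : ℝ} (ha : a = qf ρ Ψ) (ha2 : 1 / 2 < a) :
    ∃ k, a ≤ l k ∧ (2 * a - 1) ^ 2 * (1 - Complex.normSq ((Uᴴ *ᵥ Ψ) k))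
      ≤ ∑ i, Complex.normSq ((ρ *ᵥ Ψ - (a : ℂ) • Ψ) i) := by
  set w : n → ℝ := fun k => Complex.normSq ((Uᴴ *ᵥ Ψ) k) with hw
  have hw0 : ∀ k, 0 ≤ w k := fun k => Complex.normSq_nonneg _
  have hw1 : ∑ k, w k = 1 := by rw [← hΨ]; exact sum_normSq_unitary hU Ψ
  have haw : a = ∑ k, l k * w k := by rw [ha, hρ, qf_conj_diag]
  have hk : ∃ k, a ≤ l k := by
    by_contra! hcon
    have hex : ∃ k, 0 < w k := by
      by_contra! h
      have : ∑ k, w k ≤ 0 := Finset.sum_nonpos fun k _ => h k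
      linarith
    obtain ⟨k, hk⟩ := hex
    have : ∑ k, l k * w k < ∑ k, a * w k := by
      apply Finset.sum_lt_sum
      · intro i _; exact mul_le_mul_of_nonneg_right (hcon i).le (hw0 i)
      · exact ⟨k, Finset.mem_univ k, mul_lt_mul_of_pos_right (hcon k) hk⟩
    rw [← Finset.mul_sum, hw1, ← haw] at this
    linarith
  obtain ⟨k, hk⟩ := hk
  refine ⟨k, hk, ?_⟩
  have h1 : ∑ i, Complex.normSq ((ρ *ᵥ Ψ - (a : ℂ) • Ψ) i) = ∑ j, (l j - a) ^ 2 * w j := by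
    rw [← sum_normSq_unitary hU]
    refine Finset.sum_congr rfl fun j _ => ?_
    have : Uᴴ *ᵥ (ρ *ᵥ Ψ - (a : ℂ) • Ψ)
        = diagonal (fun i => (l i : ℂ)) *ᵥ (Uᴴ *ᵥ Ψ) - (a : ℂ) • (Uᴴ *ᵥ Ψ) := by
      rw [mulVec_sub, mulVec_smul, mulVec_mulVec, hρ, ← Matrix.mul_assoc, ← Matrix.mul_assoc, hU,
        Matrix.one_mul, mulVec_mulVec]
    rw [this]
    simp only [Pi.sub_apply, mulVec_diagonal, Pi.smul_apply, smul_eq_mul]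
    rw [← sub_mul, Complex.normSq_mul, ← Complex.ofReal_sub, Complex.normSq_ofReal, ← sq]
  have h2 : (2 * a - 1) ^ 2 * (1 - w k) = ∑ j ∈ Finset.univ.erase k, (2 * a - 1) ^ 2 * w j := by
    rw [← Finset.mul_sum, ← hw1, ← Finset.add_sum_erase _ _ (Finset.mem_univ k)]; ring
  rw [h1, h2]
  calc _ ≤ ∑ j ∈ Finset.univ.erase k, (l j - a) ^ 2 * w j := by
        refine Finset.sum_le_sum fun j hj => ?_
        have hjk : j ≠ k := Finset.ne_of_mem_erase hj
        have h3 : l j + l k ≤ 1 := by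
          rw [← hl1]
          exact Finset.add_le_sum (fun i _ => hl i) (Finset.mem_univ j) (Finset.mem_univ k) hjk
        refine mul_le_mul_of_nonneg_right ?_ (hw0 j)
        nlinarith [hl j]
    _ ≤ _ := by
      refine Finset.sum_le_sum_of_subset_of_nonneg (Finset.erase_subset _ _) fun j _ _ =>
        mul_nonneg (sq_nonneg _) (hw0 j)

lemma posDef_of_qf {n : Type*} [Fintype n] {A : Matrix n n ℂ} (hA : A.IsHermitian)
    (h : ∀ v, v ≠ 0 → 0 < qf A v) : A.PosDef := by
  refine PosDef.of_dotProduct_mulVec_pos hA fun v hv => ?_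
  have : (star v ⬝ᵥ (A *ᵥ v)).im = 0 := hA.im_star_dotProduct_mulVec_self v
  exact Complex.lt_def.2 ⟨h v hv, this.symm⟩

lemma qf_one {n : Type*} [Fintype n] [DecidableEq n] (v : n → ℂ) :
    qf (1 : Matrix n n ℂ) v = ∑ i, Complex.normSq (v i) := by
  simp only [qf, one_mulVec, dotProduct, Pi.star_apply, star_mul_self_normSq, Complex.re_sum,
    Complex.ofReal_re]

lemma sum_normSq_pos {n : Type*} [Fintype n] {v : n → ℂ} (hv : v ≠ 0) :
    0 < ∑ i, Complex.normSq (v i) := by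
  obtain ⟨i, hi⟩ := Function.ne_iff.1 hv
  exact Finset.sum_pos' (fun i _ => Complex.normSq_nonneg _)
    ⟨i, Finset.mem_univ i, Complex.normSq_pos.2 hi⟩

lemma qf_sum_smul {n ι : Type*} [Fintype n] [DecidableEq n] [Fintype ι] (w : ι → ℝ) (σ : ι → Matrix n n ℂ)
    (v : n → ℂ) : qf (∑ j, (w j : ℂ) • σ j) v = ∑ j, w j * qf (σ j) v := by
  simp only [← qf_smul]
  simp only [qf, sum_mulVec, dotProduct_sum, Complex.re_sum]

lemma posDef_suppLE {n : Type*} [Fintype n] {ρ σ : Matrix n n ℂ} (h : σ.PosDef) : SuppLE ρ σ := by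
  intro v hv
  by_cases h0 : v = 0
  · simp [h0]
  · have := h.dotProduct_mulVec_pos h0
    rw [hv] at this; simp at this

variable {dA dB : ℕ}

/-- the mixed separable trial state -/
lemma exists_trial [Nonempty (Fin dA)] [Nonempty (Fin dB)]
    {U V : Matrix (Fin dA × Fin dB) (Fin dA × Fin dB) ℂ} (hU : Uᴴ * U = 1) (hV : Vᴴ * V = 1)
    {l c : Fin dA × Fin dB → ℝ} (hl : ∀ i, 0 ≤ l i) (hl1 : ∑ i, l i = 1)
    (hc : ∀ i, 0 < c i) (hc1 : ∀ i, c i ≤ 1)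
    (hsep : IsSeparableState (V * diagonal (fun i => (c i : ℂ)) * Vᴴ))
    (k0 : Fin dA × Fin dB) (hk0 : 0 < l k0) :
    ∃ σ, IsSeparableState σ ∧ SuppLE (U * diagonal (fun i => (l i : ℂ)) * Uᴴ) σ ∧
      relEntropy (U * diagonal (fun i => (l i : ℂ)) * Uᴴ) σ
        ≤ (1 - l k0) * Real.log (min dA dB : ℕ)
          + ∑ n, -Real.log (c n) * Complex.normSq ((Vᴴ *ᵥ U.col k0) n) := by
  classical
  have hV2 : V * Vᴴ = 1 := mul_eq_one_comm.1 hV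
  have hcolU : ∀ k, ∑ i, Complex.normSq (U.col k i) = 1 := fun k => unitary_col_sum hU k
  choose τ hτ1 hτ2 using fun k => exists_sep_dominating (U.col k) (hcolU k)
  set σ0 := V * diagonal (fun i => (c i : ℂ)) * Vᴴ with hσ0
  set d : ℕ := min dA dB with hd
  have hd1 : 1 ≤ d := le_min (Fin.pos_iff_nonempty.2 ‹_›) (Fin.pos_iff_nonempty.2 ‹_›)
  have hdR : (0:ℝ) < d := by exact_mod_cast hd1
  let κ : Fin dA × Fin dB → Matrix (Fin dA × Fin dB) (Fin dA × Fin dB) ℂ :=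
    fun k => if k = k0 then σ0 else τ k
  have hκ : ∀ k, IsSeparableState (κ k) := by
    intro k; by_cases h : k = k0
    · simp only [κ, if_pos h]; exact hsep
    · simp only [κ, if_neg h]; exact hτ1 k
  set σ := ∑ k, (l k : ℂ) • κ k with hσ
  have hσsep : IsSeparableState σ := sep_convex l κ hl hl1 hκ
  have hσH : σ.IsHermitian := (sep_density hσsep).1.isHermitian
  have hterm : ∀ v k, 0 ≤ l k * qf (κ k) v := fun v k =>
    mul_nonneg (hl k) (qf_nonneg (sep_density (hκ k)).1 v)
  have hqσ : ∀ v, qf σ v = ∑ k, l k * qf (κ k) v := fun v => qf_sum_smul l κ v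
  have hq0 : ∀ v, qf σ0 v = ∑ i, c i * Complex.normSq ((Vᴴ *ᵥ v) i) := fun v => qf_conj_diag V c v
  obtain ⟨m, -, hm⟩ := Finset.exists_min_image Finset.univ c ⟨k0, Finset.mem_univ k0⟩
  have hq0ge : ∀ v, c m * ∑ i, Complex.normSq (v i) ≤ qf σ0 v := by
    intro v
    rw [hq0, ← sum_normSq_unitary hV, Finset.mul_sum]
    exact Finset.sum_le_sum fun i _ => mul_le_mul_of_nonneg_right (hm i (Finset.mem_univ i))
      (Complex.normSq_nonneg _)
  have hκ0 : κ k0 = σ0 := if_pos rfl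
  have hσge0 : ∀ v, l k0 * qf σ0 v ≤ qf σ v := by
    intro v
    rw [hqσ, ← hκ0]
    exact Finset.single_le_sum (f := fun k => l k * qf (κ k) v) (fun k _ => hterm v k)
      (Finset.mem_univ k0)
  have hσPD : σ.PosDef := by
    refine posDef_of_qf hσH fun v hv => ?_
    refine lt_of_lt_of_le ?_ (hσge0 v)
    refine mul_pos hk0 (lt_of_lt_of_le (mul_pos (hc m) (sum_normSq_pos hv)) (hq0ge v))
  refine ⟨σ, hσsep, posDef_suppLE hσPD, ?_⟩
  rw [relEntropy_eq hU]
  -- dominant term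
  have hdom : l k0 * (Real.log (l k0) - qf (mlog σ) (U.col k0))
      ≤ ∑ n, -Real.log (c n) * Complex.normSq ((Vᴴ *ᵥ U.col k0) n) := by
    have hA : V * diagonal (fun i => ((l k0 * c i : ℝ) : ℂ)) * Vᴴ = (l k0 : ℂ) • σ0 := by
      have : diagonal (fun i => ((l k0 * c i : ℝ) : ℂ)) = (l k0 : ℂ) • diagonal (fun i => (c i : ℂ)) := by
        rw [← diagonal_smul]; congr 1; ext i; simp
      rw [this, hσ0, Matrix.mul_smul, Matrix.smul_mul]
    have hAH := isHermitian_conj_diag V (fun i => l k0 * c i)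
    rw [hA] at hAH
    have hAPD : ((l k0 : ℂ) • σ0).PosDef := by
      refine posDef_of_qf hAH fun v hv => ?_
      rw [qf_smul]
      refine mul_pos hk0 (lt_of_lt_of_le (mul_pos (hc m) (sum_normSq_pos hv)) (hq0ge v))
    have h1 := qf_mlog_mono hAPD (B := σ) (posSemidef_of_qf (hσH.sub hAH) fun v => by
      rw [qf_sub, qf_smul]; linarith [hσge0 v]) (U.col k0)
    rw [← hA, mlog_conj hV, qf_conj_diag] at h1
    have h2 : ∑ i, Real.log (l k0 * c i) * Complex.normSq ((Vᴴ *ᵥ U.col k0) i)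
        = Real.log (l k0) + ∑ i, Real.log (c i) * Complex.normSq ((Vᴴ *ᵥ U.col k0) i) := by
      have : ∀ i, Real.log (l k0 * c i) = Real.log (l k0) + Real.log (c i) := fun i =>
        Real.log_mul hk0.ne' (hc i).ne'
      simp only [this, add_mul, Finset.sum_add_distrib, ← Finset.mul_sum]
      rw [sum_normSq_unitary hV, hcolU, mul_one]
    rw [h2] at h1
    have h3 : 0 ≤ ∑ n, -Real.log (c n) * Complex.normSq ((Vᴴ *ᵥ U.col k0) n) :=
      Finset.sum_nonneg fun n _ => mul_nonneg (neg_nonneg.2 (Real.log_nonpos (hc n).le (hc1 n)))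
        (Complex.normSq_nonneg _)
    have h4 : l k0 ≤ 1 := by
      rw [← hl1]; exact Finset.single_le_sum (fun j _ => hl j) (Finset.mem_univ k0)
    have h5 : Real.log (l k0) - qf (mlog σ) (U.col k0)
        ≤ ∑ n, -Real.log (c n) * Complex.normSq ((Vᴴ *ᵥ U.col k0) n) := by
      simp only [neg_mul, Finset.sum_neg_distrib]; linarith
    calc _ ≤ l k0 * ∑ n, -Real.log (c n) * Complex.normSq ((Vᴴ *ᵥ U.col k0) n) := by gcongr
      _ ≤ _ := mul_le_of_le_one_left h3 h4
  -- other terms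
  have hoth : ∀ k ≠ k0, l k * (Real.log (l k) - qf (mlog σ) (U.col k)) ≤ l k * Real.log d := by
    intro k hk
    rcases (hl k).eq_or_lt with h | h
    · rw [← h]; simp
    set φ := U.col k with hφ
    set η := l k0 * c m with hη
    have hη0 : 0 < η := mul_pos hk0 (hc m)
    set A : Matrix (Fin dA × Fin dB) (Fin dA × Fin dB) ℂ :=
      ((l k / d : ℝ) : ℂ) • vecMulVec φ (star φ) + (η : ℂ) • 1 with hA
    have hlk : 0 < l k / d := by positivity
    have hqA : ∀ v, qf A v = (l k / d) * qf (vecMulVec φ (star φ)) v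
        + η * ∑ i, Complex.normSq (v i) := by
      intro v; rw [hA, qf_add, qf_smul, qf_smul, qf_one]
    have hvv : ∀ v, 0 ≤ qf (vecMulVec φ (star φ)) v :=
      fun v => qf_nonneg (posSemidef_vecMulVec_self_star _) v
    have hAH : A.IsHermitian := by
      refine IsHermitian.add ?_ ?_
      · exact ((posSemidef_vecMulVec_self_star φ).smul (ofReal_nn hlk.le)).isHermitian
      · exact (PosSemidef.one.smul (ofReal_nn hη0.le)).isHermitian
    have hAPD : A.PosDef := by
      refine posDef_of_qf hAH fun v hv => ?_
      rw [hqA]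
      have := mul_pos hη0 (sum_normSq_pos hv)
      have := mul_nonneg hlk.le (hvv v)
      linarith
    have hge : ∀ v, qf A v ≤ qf σ v := by
      intro v
      have h1 := Finset.add_le_sum (f := fun k => l k * qf (κ k) v) (s := Finset.univ)
        (fun k _ => hterm v k) (Finset.mem_univ k) (Finset.mem_univ k0) hk
      rw [hqσ, hqA]
      refine le_trans (add_le_add ?_ ?_) h1
      · have h2 : κ k = τ k := if_neg hk
        have h3 := qf_nonneg (hτ2 k) v
        rw [qf_sub, qf_smul] at h3
        rw [h2, div_mul_eq_mul_div, div_le_iff₀ hdR]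
        nlinarith
      · rw [hκ0, hη, mul_assoc]
        exact mul_le_mul_of_nonneg_left (hq0ge v) hk0.le
    have h1 := qf_mlog_mono hAPD (B := σ) (posSemidef_of_qf (hσH.sub hAH) fun v => by
      rw [qf_sub]; linarith [hge v]) φ
    have hφ1 : star φ ⬝ᵥ φ = 1 := by
      simp only [dotProduct, Pi.star_apply, star_mul_self_normSq]
      exact_mod_cast hcolU k
    have hAφ : A *ᵥ φ = ((l k / d + η : ℝ) : ℂ) • φ := by
      rw [hA, add_mulVec, smul_mulVec, smul_mulVec, one_mulVec, vecMulVec_mulVec, hφ1]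
      simp [add_smul]
    have h2 : qf (mlog A) φ = Real.log (l k / d + η) := by
      rw [qf, mlog_mulVec hAH hAφ, dotProduct_smul, hφ1]; simp
    have h3 : Real.log (l k / d) ≤ Real.log (l k / d + η) := Real.log_le_log hlk (by linarith)
    rw [Real.log_div h.ne' hdR.ne'] at h3
    refine mul_le_mul_of_nonneg_left ?_ h.le
    linarith
  rw [← Finset.add_sum_erase _ _ (Finset.mem_univ k0)]
  have hrest : ∑ k ∈ Finset.univ.erase k0, l k * (Real.log (l k) - qf (mlog σ) (U.col k))
      ≤ (1 - l k0) * Real.log d := by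
    calc _ ≤ ∑ k ∈ Finset.univ.erase k0, l k * Real.log d :=
          Finset.sum_le_sum fun k hk => hoth k (Finset.ne_of_mem_erase hk)
      _ = _ := by
        rw [← Finset.sum_mul, ← hl1, ← Finset.add_sum_erase _ _ (Finset.mem_univ k0)]; ring
  linarith

end SIE5


section SIE6

variable {dA dB : ℕ}

lemma relEnt_bddBelow {ρ : Matrix (Fin dA × Fin dB) (Fin dA × Fin dB) ℂ} (h : IsDensityMatrix ρ) :
    BddBelow { x : ℝ | ∃ σ : Matrix (Fin dA × Fin dB) (Fin dA × Fin dB) ℂ,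
      IsSeparableState σ ∧ SuppLE ρ σ ∧ x = relEntropy ρ σ } := by
  obtain ⟨U, l, hU, hρ, hl, hs⟩ := density_spectral h
  refine ⟨∑ k, l k * Real.log (l k), ?_⟩
  rintro x ⟨σ, hσ, -, rfl⟩
  rw [hρ, relEntropy_eq hU]
  refine Finset.sum_le_sum fun k _ => mul_le_mul_of_nonneg_left ?_ (hl k)
  linarith [qf_mlog_nonpos (sep_density hσ) (U.col k)]

lemma conj_diag_eq_sum {n : Type*} [Fintype n] [DecidableEq n] (V : Matrix n n ℂ) (c : n → ℝ) :
    V * diagonal (fun i => (c i : ℂ)) * Vᴴ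
      = ∑ j, (c j : ℂ) • vecMulVec (V.col j) (star (V.col j)) := by
  ext a b
  rw [mul_apply, Matrix.sum_apply]
  refine Finset.sum_congr rfl fun j _ => ?_
  simp [mul_diagonal, vecMulVec_apply, Matrix.col]
  ring

lemma overlap_bound {n : Type*} [Fintype n] [DecidableEq n] {V : Matrix n n ℂ} (hV : Vᴴ * V = 1)
    {φ Ψ : n → ℂ} (hφ : ∑ i, Complex.normSq (φ i) = 1) (hΨ : ∑ i, Complex.normSq (Ψ i) = 1)
    {G : ℝ} (hG : 1 - Complex.normSq (star φ ⬝ᵥ Ψ) ≤ G) :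
    ∑ i, (‖(Vᴴ *ᵥ φ) i‖ - ‖(Vᴴ *ᵥ Ψ) i‖) ^ 2 ≤ G * (1 + G) := by
  have hV2 : V * Vᴴ = 1 := mul_eq_one_comm.1 hV
  have h1 : ∑ i, ‖(Vᴴ *ᵥ φ) i‖ ^ 2 = 1 := by
    rw [← hφ, ← sum_normSq_unitary hV]; simp only [Complex.normSq_eq_norm_sq]
  have h2 : ∑ i, ‖(Vᴴ *ᵥ Ψ) i‖ ^ 2 = 1 := by
    rw [← hΨ, ← sum_normSq_unitary hV]; simp only [Complex.normSq_eq_norm_sq]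
  have h3 : star (Vᴴ *ᵥ φ) ⬝ᵥ (Vᴴ *ᵥ Ψ) = star φ ⬝ᵥ Ψ := by
    rw [star_mulVec, conjTranspose_conjTranspose, ← dotProduct_mulVec, mulVec_mulVec, hV2,
      one_mulVec]
  have h4 : ‖star φ ⬝ᵥ Ψ‖ ≤ ∑ i, ‖(Vᴴ *ᵥ φ) i‖ * ‖(Vᴴ *ᵥ Ψ) i‖ := by
    rw [← h3]
    refine (norm_sum_le _ _).trans (le_of_eq ?_)
    refine Finset.sum_congr rfl fun i _ => ?_
    rw [norm_mul, Pi.star_apply, norm_star]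
  rw [Complex.normSq_eq_norm_sq] at hG
  set q := ‖star φ ⬝ᵥ Ψ‖ with hq
  have hq0 : 0 ≤ q := norm_nonneg _
  have h5 : ∑ i, (‖(Vᴴ *ᵥ φ) i‖ - ‖(Vᴴ *ᵥ Ψ) i‖) ^ 2
      = 2 - 2 * ∑ i, ‖(Vᴴ *ᵥ φ) i‖ * ‖(Vᴴ *ᵥ Ψ) i‖ := by
    have : ∀ i, (‖(Vᴴ *ᵥ φ) i‖ - ‖(Vᴴ *ᵥ Ψ) i‖) ^ 2 = ‖(Vᴴ *ᵥ φ) i‖ ^ 2 + ‖(Vᴴ *ᵥ Ψ) i‖ ^ 2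
        - 2 * (‖(Vᴴ *ᵥ φ) i‖ * ‖(Vᴴ *ᵥ Ψ) i‖) := fun i => by ring
    simp only [this, Finset.sum_sub_distrib, Finset.sum_add_distrib, h1, h2, ← Finset.mul_sum]
    norm_num
  have hq1 : q ≤ 1 := by
    have := Finset.sum_nonneg (s := Finset.univ)
      (fun i _ => sq_nonneg (‖(Vᴴ *ᵥ φ) i‖ - ‖(Vᴴ *ᵥ Ψ) i‖))
    linarith
  have h6 : 2 - 2 * q ≤ (1 - q ^ 2) * (1 + (1 - q ^ 2)) := by
    have : 0 ≤ q * (1 - q) * ((1 - q) * (2 + q)) := by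
      have : 0 ≤ 1 - q := by linarith
      positivity
    nlinarith
  have h7 : 0 ≤ 1 - q ^ 2 := by nlinarith
  have h8 : (1 - q ^ 2) * (1 + (1 - q ^ 2)) ≤ G * (1 + G) := by nlinarith
  linarith

theorem static_bound {Ψ : Fin dA × Fin dB → ℂ} (hΨ : ∑ i, Complex.normSq (Ψ i) = 1) :
    ∃ S M : ℝ, S ≤ relEntEntanglement (vecMulVec Ψ (star Ψ)) ∧
      ∀ ρ : Matrix (Fin dA × Fin dB) (Fin dA × Fin dB) ℂ, IsDensityMatrix ρ → 1 / 2 < qf ρ Ψ →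
      ∀ G s : ℝ, 0 < s → s < 1 →
      (∑ i, Complex.normSq ((ρ *ᵥ Ψ - ((qf ρ Ψ : ℝ) : ℂ) • Ψ) i)) ≤ G * (2 * qf ρ Ψ - 1) ^ 2 →
      relEntEntanglement ρ ≤ S + (1 - qf ρ Ψ) * Real.log (min dA dB : ℕ) - Real.log (1 - s)
        + 4 * Real.log (min dA dB : ℕ) * Real.sqrt (G * (1 + G))
        + G * (1 + G) * (M - Real.log s) := by
  classical
  have hne : Nonempty (Fin dA × Fin dB) := by
    by_contra h
    rw [not_nonempty_iff] at h
    simp at hΨ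
  obtain ⟨⟨i0, j0⟩⟩ := id hne
  haveI : Nonempty (Fin dA) := ⟨i0⟩
  haveI : Nonempty (Fin dB) := ⟨j0⟩
  obtain ⟨W, p, hW, hM, hp, hp1⟩ := exists_schmidtA Ψ hΨ
  obtain ⟨hcard, V, B, hV, hVB, hVΨ⟩ := exists_adapted hW hM j0
  set d : ℕ := min dA dB with hd
  set y : Fin dA × Fin dB → ℝ := fun n => ‖(Vᴴ *ᵥ Ψ) n‖ with hy
  have hy2 : ∀ i j, y (i, j) ^ 2 = if j = j0 then p i else 0 := by
    intro i j
    simp only [hy, hVΨ]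
    split_ifs
    · rw [Complex.norm_real, Real.norm_eq_abs, sq_abs, Real.sq_sqrt (hp i)]
    · simp
  have hy1 : ∑ n, y n ^ 2 = 1 := by
    rw [← hΨ, ← sum_normSq_unitary hV]; simp only [Complex.normSq_eq_norm_sq, hy]
  have hyS : ∑ n, y n ^ 2 * Real.log (y n ^ 2) = ∑ i, p i * Real.log (p i) := by
    rw [Fintype.sum_prod_type]
    refine Finset.sum_congr rfl fun i _ => ?_
    simp only [hy2]
    rw [Finset.sum_eq_single j0]
    · simp
    · intro j _ hj; simp [hj]
    · simp
  have hyQ : ∑ n, y n ^ 2 * Real.log (y n ^ 2) ^ 2 = ∑ i, p i * Real.log (p i) ^ 2 := by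
    rw [Fintype.sum_prod_type]
    refine Finset.sum_congr rfl fun i _ => ?_
    simp only [hy2]
    rw [Finset.sum_eq_single j0]
    · simp
    · intro j _ hj; simp [hj]
    · simp
  have hld : 0 ≤ Real.log d := Real.log_natCast_nonneg d
  have hQ : Real.sqrt (∑ n, y n ^ 2 * Real.log (y n ^ 2) ^ 2) ≤ 2 * Real.log d := by
    rw [hyQ]
    refine Real.sqrt_le_iff.2 ⟨by positivity, (sum_p_log_sq p hp hp1 hcard).trans (le_of_eq ?_)⟩
    ring
  set D : ℝ := (Fintype.card (Fin dA × Fin dB) : ℝ) with hD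
  have hDpos : 0 < D := by rw [hD]; exact_mod_cast Fintype.card_pos
  set S := -∑ i, p i * Real.log (p i) with hS
  set M := (∑ n, -Real.log (y n ^ 2)) + Real.log D with hMdef
  have main : ∀ ρ : Matrix (Fin dA × Fin dB) (Fin dA × Fin dB) ℂ, IsDensityMatrix ρ →
      1 / 2 < qf ρ Ψ → ∀ G s : ℝ, 0 < s → s < 1 →
      (∑ i, Complex.normSq ((ρ *ᵥ Ψ - ((qf ρ Ψ : ℝ) : ℂ) • Ψ) i)) ≤ G * (2 * qf ρ Ψ - 1) ^ 2 →
      ∃ σ, IsSeparableState σ ∧ SuppLE ρ σ ∧ relEntropy ρ σ ≤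
        S + (1 - qf ρ Ψ) * Real.log (min dA dB : ℕ) - Real.log (1 - s)
        + 4 * Real.log (min dA dB : ℕ) * Real.sqrt (G * (1 + G))
        + G * (1 + G) * (M - Real.log s) := by
    intro ρ hρ ha G s hs hs1 hG
    obtain ⟨U, l, hU, hρU, hl, hl1⟩ := density_spectral hρ
    obtain ⟨k, hk1, hk2⟩ := dominant_eigenvector hU hl hl1 hΨ hρU rfl ha
    set a := qf ρ Ψ with hadef
    have ha2 : 0 < (2 * a - 1) ^ 2 := by
      have : 0 < 2 * a - 1 := by linarith
      positivity
    set c : Fin dA × Fin dB → ℝ := fun n => (1 - s) * y n ^ 2 + s / D with hc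
    have hc0 : ∀ n, 0 < c n := fun n => by
      have h1 : 0 ≤ (1 - s) * y n ^ 2 := mul_nonneg (by linarith) (sq_nonneg _)
      have h2 : 0 < s / D := by positivity
      simp only [hc]; linarith
    have hcs : ∑ n, c n = 1 := by
      simp only [hc, Finset.sum_add_distrib, ← Finset.mul_sum, hy1, Finset.sum_const,
        Finset.card_univ, nsmul_eq_mul, ← hD]
      field_simp; ring
    have hc1 : ∀ n, c n ≤ 1 := fun n => by
      rw [← hcs]; exact Finset.single_le_sum (fun j _ => (hc0 j).le) (Finset.mem_univ n)
    have hsep : IsSeparableState (V * diagonal (fun i => (c i : ℂ)) * Vᴴ) := by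
      rw [conj_diag_eq_sum]
      refine sep_of_vec c (fun n => W.col n.1) (fun n => (B n.1).col n.2) (fun n => V.col n)
        (fun n x => hVB x n) (fun n => (hc0 n).le) ?_
      have : ∀ n, ∑ x, Complex.normSq (V.col n x) = 1 := fun n => unitary_col_sum hV n
      simp only [this, mul_one, hcs]
    obtain ⟨σ, h1, h2, h3⟩ := exists_trial hU hV hl hl1 hc0 hc1 hsep k (by linarith)
    refine ⟨σ, h1, hρU ▸ h2, ?_⟩
    rw [← hρU] at h3
    have hcol : ∑ i, Complex.normSq (U.col k i) = 1 := unitary_col_sum hU k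
    have hw : (Uᴴ *ᵥ Ψ) k = star (U.col k) ⬝ᵥ Ψ := rfl
    have hG' : 1 - Complex.normSq (star (U.col k) ⬝ᵥ Ψ) ≤ G := by
      rw [← hw]
      have := hk2.trans hG
      rw [mul_comm] at this
      exact le_of_mul_le_mul_right this ha2
    have h4 := classical_bound (fun n => ‖(Vᴴ *ᵥ U.col k) n‖) y (fun n => norm_nonneg _)
      (by rw [← hcol, ← sum_normSq_unitary hV]; simp only [Complex.normSq_eq_norm_sq]) hy1 hs hs1
      (overlap_bound hV hcol hΨ hG')
    simp only [Complex.normSq_eq_norm_sq] at h3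
    have h5 : (1 - l k) * Real.log d ≤ (1 - a) * Real.log d :=
      mul_le_mul_of_nonneg_right (by linarith) hld
    have h6 := mul_le_mul_of_nonneg_left hQ (Real.sqrt_nonneg (G * (1 + G)))
    rw [← hD, Real.log_div hDpos.ne' hs.ne', hyS] at h4
    have h7 : (∑ n, -Real.log (y n ^ 2)) + (Real.log D - Real.log s) = M - Real.log s := by
      rw [hMdef]; ring
    rw [h7] at h4
    simp only [hc, ← hd] at h3 ⊢
    linarith
  refine ⟨S, M, ?_, ?_⟩
  · have hden : IsDensityMatrix (vecMulVec Ψ (star Ψ)) := by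
      refine ⟨posSemidef_vecMulVec_self_star _, ?_⟩
      rw [trace_vecMulVec]
      simp only [dotProduct, Pi.star_apply, mul_star_self_normSq]
      exact_mod_cast hΨ
    have hΨ1 : star Ψ ⬝ᵥ Ψ = 1 := by
      simp only [dotProduct, Pi.star_apply, star_mul_self_normSq]
      exact_mod_cast hΨ
    have hq : qf (vecMulVec Ψ (star Ψ)) Ψ = 1 := by rw [qf_vecMulVec, hΨ1]; simp
    obtain ⟨σ, h1, h2, -⟩ := main _ hden (by rw [hq]; norm_num) 0 (1/2) (by norm_num) (by norm_num)
      (by rw [hq, vecMulVec_mulVec, hΨ1]; simp)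
    refine le_csInf ⟨_, σ, h1, h2, rfl⟩ ?_
    rintro x ⟨σ, h1, h2, rfl⟩
    exact relEntropy_pure_ge hΨ hW hM hp hp1 h1 h2
  · intro ρ hρ ha G s hs hs1 hG
    obtain ⟨σ, h1, h2, h3⟩ := main ρ hρ ha G s hs hs1 hG
    exact (csInf_le (relEnt_bddBelow hρ) ⟨σ, h1, h2, rfl⟩).trans h3

end SIE6


section SIE7

set_option linter.unusedSectionVars false

variable {n ι : Type*} [Fintype n] [DecidableEq n] [Fintype ι]

lemma lindblad_add (H : Matrix n n ℂ) (L : ι → Matrix n n ℂ) (A B : Matrix n n ℂ) :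
    lindblad H L (A + B) = lindblad H L A + lindblad H L B := by
  simp only [lindblad, Matrix.mul_add, Matrix.add_mul, smul_add]
  have : ∀ α, L α * A * (L α)ᴴ + L α * B * (L α)ᴴ
      - ((2:ℂ)⁻¹ • ((L α)ᴴ * L α * A) + (2:ℂ)⁻¹ • ((L α)ᴴ * L α * B))
      - ((2:ℂ)⁻¹ • (A * (L α)ᴴ * L α) + (2:ℂ)⁻¹ • (B * (L α)ᴴ * L α))
      = (L α * A * (L α)ᴴ - (2:ℂ)⁻¹ • ((L α)ᴴ * L α * A) - (2:ℂ)⁻¹ • (A * (L α)ᴴ * L α))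
      + (L α * B * (L α)ᴴ - (2:ℂ)⁻¹ • ((L α)ᴴ * L α * B) - (2:ℂ)⁻¹ • (B * (L α)ᴴ * L α)) := by
    intro α; abel
  simp only [this, Finset.sum_add_distrib, smul_sub, smul_add]
  abel

lemma lindblad_smul (H : Matrix n n ℂ) (L : ι → Matrix n n ℂ) (c : ℂ) (A : Matrix n n ℂ) :
    lindblad H L (c • A) = c • lindblad H L A := by
  simp only [lindblad, Matrix.mul_smul, Matrix.smul_mul, smul_add, Finset.smul_sum, smul_sub]
  simp only [smul_comm c]

lemma lindblad_conjTranspose {H : Matrix n n ℂ} (hH : H.IsHermitian) (L : ι → Matrix n n ℂ)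
    (A : Matrix n n ℂ) : (lindblad H L A)ᴴ = lindblad H L Aᴴ := by
  simp only [lindblad, conjTranspose_add, conjTranspose_sub, conjTranspose_smul, conjTranspose_mul,
    conjTranspose_sum, conjTranspose_conjTranspose, hH.eq, Matrix.mul_assoc]
  congr 1
  · simp [smul_sub]; abel
  · refine Finset.sum_congr rfl fun α _ => ?_
    simp; abel

lemma lindblad_trace (H : Matrix n n ℂ) (L : ι → Matrix n n ℂ) (A : Matrix n n ℂ) :
    (lindblad H L A).trace = 0 := by
  simp only [lindblad, trace_add, trace_smul, trace_sub, trace_sum]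
  rw [Matrix.trace_mul_comm H A, sub_self, smul_zero, zero_add]
  refine Finset.sum_eq_zero fun α _ => ?_
  rw [Matrix.trace_mul_comm (L α * A), Matrix.mul_assoc A, Matrix.trace_mul_comm A, Matrix.mul_assoc]
  simp only [smul_eq_mul]; ring

/-- the form of the generator at a kernel vector -/
lemma qf_lindblad_kernel (H : Matrix n n ℂ) (L : ι → Matrix n n ℂ) {B : Matrix n n ℂ}
    (hB : B.IsHermitian) {v : n → ℂ} (hv : B *ᵥ v = 0) :
    qf (lindblad H L B) v = ∑ α, qf B ((L α)ᴴ *ᵥ v) := by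
  have hv' : star v ᵥ* B = 0 := by
    have := congrArg star hv
    rw [star_mulVec, hB.eq] at this
    simpa using this
  have h1 : ∀ C : Matrix n n ℂ, (C * B) *ᵥ v = 0 := fun C => by
    rw [← mulVec_mulVec, hv, mulVec_zero]
  have h2 : ∀ C : Matrix n n ℂ, star v ⬝ᵥ ((B * C) *ᵥ v) = 0 := fun C => by
    rw [← mulVec_mulVec, dotProduct_mulVec, hv', zero_dotProduct]
  simp only [qf, lindblad, add_mulVec, smul_mulVec, sub_mulVec, sum_mulVec, dotProduct_add,
    dotProduct_smul, dotProduct_sub, dotProduct_sum, h1, dotProduct_zero, Matrix.mul_assoc B, h2]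
  simp only [sub_zero, smul_zero, zero_add, Complex.re_sum]
  refine Finset.sum_congr rfl fun α _ => ?_
  rw [star_mulVec, conjTranspose_conjTranspose, ← dotProduct_mulVec, mulVec_mulVec, mulVec_mulVec,
    Matrix.mul_assoc]

lemma qf_smul_vec (A : Matrix n n ℂ) (r : ℝ) (v : n → ℂ) :
    qf A ((r : ℂ) • v) = r ^ 2 * qf A v := by
  simp only [qf, mulVec_smul, star_smul, dotProduct_smul, smul_dotProduct]
  simp [sq, mul_assoc]

lemma posSemidef_of_qf_unit {A : Matrix n n ℂ} (hA : A.IsHermitian)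
    (h : ∀ v : n → ℂ, ∑ i, Complex.normSq (v i) = 1 → 0 ≤ qf A v) : A.PosSemidef := by
  refine posSemidef_of_qf hA fun v => ?_
  by_cases h0 : v = 0
  · simp [h0, qf]
  have hs := sum_normSq_pos h0
  set N := ∑ i, Complex.normSq (v i) with hN
  have h1 := h (((Real.sqrt N)⁻¹ : ℝ) • v |> fun w => w) (by
    simp only [Pi.smul_apply, Complex.real_smul, Complex.normSq_mul, Complex.normSq_ofReal,
      ← Finset.mul_sum, ← hN]
    rw [← mul_inv, Real.mul_self_sqrt hs.le, inv_mul_cancel₀ hs.ne'])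
  have h2 : ((Real.sqrt N)⁻¹ : ℝ) • v = (((Real.sqrt N)⁻¹ : ℝ) : ℂ) • v := by
    ext i; simp
  simp only [h2] at h1
  rw [qf_smul_vec] at h1
  have : 0 < (Real.sqrt N)⁻¹ ^ 2 := by
    have := Real.sqrt_pos.2 hs
    positivity
  exact nonneg_of_mul_nonneg_right h1 this

lemma isCompact_unit : IsCompact {v : n → ℂ | ∑ i, Complex.normSq (v i) = 1} := by
  refine Metric.isCompact_of_isClosed_isBounded ?_ ?_
  · refine isClosed_eq ?_ continuous_const
    exact continuous_finsetSum _ fun i _ => Complex.continuous_normSq.comp (continuous_apply i)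
  · refine (Metric.isBounded_closedBall (x := (0 : n → ℂ)) (r := 1)).subset fun v hv => ?_
    rw [mem_closedBall_zero_iff, pi_norm_le_iff_of_nonneg zero_le_one]
    intro i
    have : Complex.normSq (v i) ≤ 1 := by
      rw [← (hv : ∑ i, Complex.normSq (v i) = 1)]
      exact Finset.single_le_sum (fun j _ => Complex.normSq_nonneg (v j)) (Finset.mem_univ i)
    rw [Complex.normSq_eq_norm_sq] at this
    exact (sq_le_one_iff₀ (norm_nonneg _)).1 this

lemma qf_hasDerivAt {ρ X : ℝ → Matrix n n ℂ} {t : ℝ}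
    (h : ∀ i j, HasDerivAt (fun s => ρ s i j) (X t i j) t) (v : n → ℂ) :
    HasDerivAt (fun s => qf (ρ s) v) (qf (X t) v) t := by
  have h1 : HasDerivAt (fun s => star v ⬝ᵥ (ρ s *ᵥ v)) (star v ⬝ᵥ (X t *ᵥ v)) t := by
    simp only [dotProduct, mulVec]
    refine HasDerivAt.fun_sum fun i _ => HasDerivAt.const_mul _ ?_
    exact HasDerivAt.fun_sum fun j _ => HasDerivAt.mul_const (h i j) _
  exact (Complex.reCLM.hasFDerivAt.comp_hasDerivAt t h1)

lemma qf_continuous {ρ : ℝ → Matrix n n ℂ} (h : ∀ i j, Continuous (fun s => ρ s i j)) :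
    Continuous (fun x : ℝ × (n → ℂ) => qf (ρ x.1) x.2) := by
  simp only [qf, dotProduct, mulVec, Pi.star_apply]
  refine Complex.continuous_re.comp (continuous_finsetSum _ fun i _ => ?_)
  refine Continuous.mul (by fun_prop) (continuous_finsetSum _ fun j _ => ?_)
  exact Continuous.mul ((h i j).comp continuous_fst) (by fun_prop)

variable {H : Matrix n n ℂ} {L : ι → Matrix n n ℂ} {ρ : ℝ → Matrix n n ℂ}

lemma evol_trace (hdyn : ∀ t i j, HasDerivAt (fun s => ρ s i j) (lindblad H L (ρ t) i j) t) (t : ℝ) :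
    (ρ t).trace = (ρ 0).trace := by
  have h1 : ∀ t, HasDerivAt (fun s => (ρ s).trace) 0 t := by
    intro t
    rw [← lindblad_trace H L (ρ t)]
    exact HasDerivAt.fun_sum fun i _ => hdyn t i i
  exact is_const_of_deriv_eq_zero (fun t => (h1 t).differentiableAt) (fun t => (h1 t).deriv) t 0

lemma evol_hermitian (hH : H.IsHermitian)
    (hdyn : ∀ t i j, HasDerivAt (fun s => ρ s i j) (lindblad H L (ρ t) i j) t)
    (h0 : (ρ 0).IsHermitian) (t : ℝ) : (ρ t).IsHermitian := by
  let T : (n → n → ℂ) →ₗ[ℂ] (n → n → ℂ) :=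
    { toFun := fun A => lindblad H L A
      map_add' := fun A B => lindblad_add H L A B
      map_smul' := fun c A => lindblad_smul H L c A }
  let T' : (n → n → ℂ) →L[ℂ] (n → n → ℂ) := LinearMap.toContinuousLinearMap T
  have hT : ∀ A, T' A = lindblad H L A := fun A => rfl
  have h1 : ∀ t, HasDerivAt (fun s => (ρ s : n → n → ℂ)) (T' (ρ t)) t := by
    intro t
    refine hasDerivAt_pi.2 fun i => hasDerivAt_pi.2 fun j => hdyn t i j
  have h2 : ∀ t, HasDerivAt (fun s => ((ρ s)ᴴ : n → n → ℂ)) (T' ((ρ t)ᴴ)) t := by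
    intro t
    refine hasDerivAt_pi.2 fun i => hasDerivAt_pi.2 fun j => ?_
    have e : T' ((ρ t)ᴴ) i j = star (lindblad H L (ρ t) j i) := by
      exact (congrFun (congrFun (lindblad_conjTranspose hH L (ρ t)) i) j).symm
    rw [e]
    exact (hdyn t j i).star
  have := ODE_solution_unique_univ (v := fun _ => T') (s := fun _ => Set.univ) (t₀ := 0)
    (fun _ => T'.lipschitz.lipschitzOnWith) (fun t => ⟨h2 t, trivial⟩) (fun t => ⟨h1 t, trivial⟩)
    (by exact h0)
  exact congrFun this t

lemma evol_posSemidef (hH : H.IsHermitian)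
    (hdyn : ∀ t i j, HasDerivAt (fun s => ρ s i j) (lindblad H L (ρ t) i j) t)
    (h0 : (ρ 0).PosSemidef) {t : ℝ} (ht : 0 ≤ t) : (ρ t).PosSemidef := by
  have hherm := evol_hermitian hH hdyn h0.isHermitian
  have hcont : ∀ i j, Continuous (fun s => ρ s i j) := fun i j =>
    continuous_iff_continuousAt.2 fun t => (hdyn t i j).continuousAt
  set Sph := {v : n → ℂ | ∑ i, Complex.normSq (v i) = 1} with hSph
  have hSc : IsCompact Sph := isCompact_unit
  obtain ⟨c, hc⟩ : ∃ c, ∀ v ∈ Sph, qf (lindblad H L 1) v < c := by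
    have hcont1 : Continuous (fun v => qf (lindblad H L 1) v) := by
      have := qf_continuous (ρ := fun _ => lindblad H L (1 : Matrix n n ℂ)) (fun i j => continuous_const)
      exact this.comp (Continuous.prodMk_right (0:ℝ))
    obtain ⟨c, hc⟩ := (hSc.image hcont1).bddAbove
    exact ⟨c + 1, fun v hv => by
      have := hc (Set.mem_image_of_mem _ hv)
      linarith⟩
  -- strict positivity of the perturbed flow
  have key : ∀ η > 0, ∀ v ∈ Sph, 0 < qf (ρ t) v + η * Real.exp (c * t) := by
    intro η hη
    by_contra! hbad
    obtain ⟨v1, hv1, hbad⟩ := hbad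
    set f : ℝ × (n → ℂ) → ℝ := fun x => qf (ρ x.1) x.2 + η * Real.exp (c * x.1) with hf
    have hfc : Continuous f := by
      refine (qf_continuous hcont).add ?_
      fun_prop
    set Z := (Set.Icc 0 t ×ˢ Sph) ∩ {x | f x ≤ 0} with hZ
    have hZc : IsCompact Z := (isCompact_Icc.prod hSc).inter_right (isClosed_le hfc continuous_const)
    obtain ⟨⟨ts, vs⟩, hmem, hmin⟩ := hZc.exists_isMinOn (f := Prod.fst)
      ⟨(t, v1), ⟨⟨ht, le_rfl⟩, hv1⟩, hbad⟩ continuous_fst.continuousOn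
    obtain ⟨⟨⟨hts0, hts1⟩, hvs⟩, hfs⟩ := hmem
    have hgood : ∀ s, 0 ≤ s → s < ts → ∀ v ∈ Sph, 0 < f (s, v) := by
      intro s hs1 hs2 v hv
      by_contra! hcon
      have : ts ≤ s := hmin (show (s, v) ∈ Z from ⟨⟨⟨hs1, hs2.le.trans hts1⟩, hv⟩, hcon⟩)
      linarith
    have htspos : 0 < ts := by
      rcases hts0.eq_or_lt with h | h
      · exfalso
        have h1 := qf_nonneg h0 vs
        have h2 : f (ts, vs) ≤ 0 := hfs
        simp only at h
        simp only [hf, ← h, mul_zero, Real.exp_zero] at h2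
        linarith
      · exact h
    -- f (ts, ·) is nonnegative
    have hnn : ∀ v ∈ Sph, 0 ≤ f (ts, v) := by
      intro v hv
      have hcv : Continuous (fun s => f (s, v)) := hfc.comp (Continuous.prodMk_left v)
      have htend : Filter.Tendsto (fun s => f (s, v)) (nhdsWithin ts (Set.Iio ts)) (nhds (f (ts, v))) :=
        (hcv.tendsto ts).mono_left nhdsWithin_le_nhds
      refine ge_of_tendsto htend ?_
      have : Set.Ioo 0 ts ∈ nhdsWithin ts (Set.Iio ts) := Ioo_mem_nhdsLT htspos
      filter_upwards [this] with s hs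
      exact (hgood s hs.1.le hs.2 v hv).le
    set e := η * Real.exp (c * ts) with he
    have he0 : 0 < e := by positivity
    set B : Matrix n n ℂ := ρ ts + (e : ℂ) • 1 with hB
    have hqB : ∀ v ∈ Sph, qf B v = f (ts, v) := by
      intro v hv
      rw [hB, qf_add, qf_smul, qf_one, (hv : ∑ i, Complex.normSq (v i) = 1), mul_one]
    have hBH : B.IsHermitian := (hherm ts).add (PosSemidef.one.smul (ofReal_nn he0.le)).isHermitian
    have hBP : B.PosSemidef := posSemidef_of_qf_unit hBH fun v hv => by
      rw [hqB v hv]; exact hnn v hv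
    have hqs : qf B vs = 0 := le_antisymm (by rw [hqB vs hvs]; exact hfs)
      (by rw [hqB vs hvs]; exact hnn vs hvs)
    have hker : B *ᵥ vs = 0 := by
      rw [← hBP.dotProduct_mulVec_zero_iff]
      apply Complex.ext
      · exact hqs
      · exact hBH.im_star_dotProduct_mulVec_self vs
    have hder : HasDerivAt (fun s => f (s, vs)) (qf (lindblad H L (ρ ts)) vs + c * e) ts := by
      refine (qf_hasDerivAt (X := fun s => lindblad H L (ρ s)) (hdyn ts) vs).add ?_
      have h1 : HasDerivAt (fun s : ℝ => c * s) c ts := by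
        simpa using (hasDerivAt_id ts).const_mul c
      have := (h1.exp).const_mul η
      have e1 : η * (Real.exp (c * ts) * c) = c * e := by rw [he]; ring
      rw [e1] at this
      exact this
    have hpos : 0 < qf (lindblad H L (ρ ts)) vs + c * e := by
      have h1 : lindblad H L B = lindblad H L (ρ ts) + (e : ℂ) • lindblad H L 1 := by
        rw [hB, lindblad_add, lindblad_smul]
      have h2 := qf_lindblad_kernel H L hBH hker
      rw [h1, qf_add, qf_smul] at h2
      have h3 : 0 ≤ ∑ α, qf B ((L α)ᴴ *ᵥ vs) := Finset.sum_nonneg fun α _ => qf_nonneg hBP _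
      have h4 := mul_lt_mul_of_pos_left (hc vs hvs) he0
      linarith
    have hfts : f (ts, vs) = 0 := by rw [← hqB vs hvs, hqs]
    have hslope := (hasDerivWithinAt_iff_tendsto_slope' (s := Set.Iio ts) (by simp)).1
      (hder.hasDerivWithinAt (s := Set.Iio ts))
    have : qf (lindblad H L (ρ ts)) vs + c * e ≤ 0 := by
      refine le_of_tendsto hslope ?_
      have : Set.Ioo 0 ts ∈ nhdsWithin ts (Set.Iio ts) := Ioo_mem_nhdsLT htspos
      filter_upwards [this] with s hs
      rw [slope_def_field, hfts, sub_zero]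
      exact div_nonpos_of_nonneg_of_nonpos (hgood s hs.1.le hs.2 vs hvs).le (by linarith [hs.2])
    linarith
  refine posSemidef_of_qf_unit (hherm t) fun v hv => ?_
  refine le_of_forall_pos_lt_add fun ε hε => ?_
  have := key (ε * Real.exp (-(c * t))) (by positivity) v hv
  rw [mul_assoc, ← Real.exp_add, neg_add_cancel, Real.exp_zero, mul_one] at this
  exact this

lemma evol_density (hH : H.IsHermitian)
    (hdyn : ∀ t i j, HasDerivAt (fun s => ρ s i j) (lindblad H L (ρ t) i j) t)
    (h0 : IsDensityMatrix (ρ 0)) {t : ℝ} (ht : 0 ≤ t) : IsDensityMatrix (ρ t) :=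
  ⟨evol_posSemidef hH hdyn h0.1 ht, (evol_trace hdyn t).trans h0.2⟩

end SIE7


section SIE8

set_option linter.unusedSectionVars false

variable {n ι : Type*} [Fintype n] [DecidableEq n] [Fintype ι]

/-- Euclidean norm of a vector -/
noncomputable def nrm (v : n → ℂ) : ℝ := ‖(WithLp.toLp 2 v : EuclideanSpace ℂ n)‖

lemma nrm_nonneg (v : n → ℂ) : 0 ≤ nrm v := norm_nonneg _

lemma nrm_sq (v : n → ℂ) : nrm v ^ 2 = ∑ i, Complex.normSq (v i) := by
  rw [nrm, EuclideanSpace.norm_sq_eq]; simp only [Complex.normSq_eq_norm_sq]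

lemma nrm_add_le (u v : n → ℂ) : nrm (u + v) ≤ nrm u + nrm v := by
  simp only [nrm, WithLp.toLp_add]; exact norm_add_le _ _

lemma nrm_sub_le (u v : n → ℂ) : nrm (u - v) ≤ nrm u + nrm v := by
  simp only [nrm, WithLp.toLp_sub]; exact norm_sub_le _ _

lemma nrm_smul (c : ℂ) (v : n → ℂ) : nrm (c • v) = ‖c‖ * nrm v := by
  simp only [nrm, WithLp.toLp_smul]; exact norm_smul _ _

lemma nrm_sum_le (f : ι → n → ℂ) : nrm (∑ j, f j) ≤ ∑ j, nrm (f j) := by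
  simp only [nrm, WithLp.toLp_sum]; exact norm_sum_le _ _

lemma nrm_mulVec_le (A : Matrix n n ℂ) (v : n → ℂ) : nrm (A *ᵥ v) ≤ opNorm A * nrm v := by
  rw [nrm, ← toEuclideanCLM_toLp]; exact ContinuousLinearMap.le_opNorm _ _

lemma opNorm_nonneg (A : Matrix n n ℂ) : 0 ≤ opNorm A := norm_nonneg _

lemma opNorm_conjTranspose (A : Matrix n n ℂ) : opNorm Aᴴ = opNorm A := by
  rw [opNorm, opNorm, ← star_eq_conjTranspose, map_star]
  exact LinearIsometryEquiv.norm_map ContinuousLinearMap.adjoint _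

lemma inner_toLp (u v : n → ℂ) :
    inner ℂ (WithLp.toLp 2 u : EuclideanSpace ℂ n) (WithLp.toLp 2 v) = star u ⬝ᵥ v := by
  rw [PiLp.inner_apply]
  simp [dotProduct, mul_comm]

lemma norm_dot_le (u v : n → ℂ) : ‖star u ⬝ᵥ v‖ ≤ nrm u * nrm v := by
  rw [← inner_toLp]; exact norm_inner_le_norm _ _

lemma nrm_proj_le {Ψ : n → ℂ} (hΨ : star Ψ ⬝ᵥ Ψ = 1) (v : n → ℂ) :
    nrm (v - (star Ψ ⬝ᵥ v) • Ψ) ≤ nrm v := by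
  have h1 : nrm Ψ = 1 := by
    have : nrm Ψ ^ 2 = 1 := by
      rw [nrm_sq]
      have : ((∑ i, Complex.normSq (Ψ i) : ℝ) : ℂ) = 1 := by
        rw [← hΨ]; simp only [dotProduct, Pi.star_apply, star_mul_self_normSq]; push_cast; rfl
      exact_mod_cast this
    exact (pow_eq_one_iff_of_nonneg (nrm_nonneg Ψ) two_ne_zero).1 this
  have h2 : nrm (v - (star Ψ ⬝ᵥ v) • Ψ) ^ 2 ≤ nrm v ^ 2 := by
    have := norm_sub_sq (𝕜 := ℂ) (WithLp.toLp 2 v : EuclideanSpace ℂ n)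
      (WithLp.toLp 2 ((star Ψ ⬝ᵥ v) • Ψ))
    rw [← WithLp.toLp_sub, inner_toLp] at this
    change nrm _ ^ 2 = nrm _ ^ 2 - 2 * _ + nrm _ ^ 2 at this
    rw [this, nrm_smul, h1, mul_one, dotProduct_smul]
    have e : star v ⬝ᵥ Ψ = star (star Ψ ⬝ᵥ v) := by simp [dotProduct, mul_comm]
    rw [e, smul_eq_mul, mul_star_self_normSq, Complex.normSq_eq_norm_sq]
    simp only [RCLike.re_to_complex, Complex.ofReal_re]
    nlinarith [sq_nonneg ‖star Ψ ⬝ᵥ v‖]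
  exact (sq_le_sq₀ (nrm_nonneg _) (nrm_nonneg _)).1 h2

lemma generator_bounds {H : Matrix n n ℂ} (hH : H.IsHermitian) (L : ι → Matrix n n ℂ) {Ψ : n → ℂ}
    (hΨ : ∑ i, Complex.normSq (Ψ i) = 1) :
    -qf (lindblad H L (vecMulVec Ψ (star Ψ))) Ψ ≤ 2 * ∑ α, opNorm (L α) ^ 2 ∧
    nrm (lindblad H L (vecMulVec Ψ (star Ψ)) *ᵥ Ψ
      - ((qf (lindblad H L (vecMulVec Ψ (star Ψ))) Ψ : ℝ) : ℂ) • Ψ)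
      ≤ opNorm H + 4 * ∑ α, opNorm (L α) ^ 2 := by
  have hΨ1 : star Ψ ⬝ᵥ Ψ = 1 := by
    simp only [dotProduct, Pi.star_apply, star_mul_self_normSq]
    exact_mod_cast hΨ
  have hn : nrm Ψ = 1 := by
    have : nrm Ψ ^ 2 = 1 := by rw [nrm_sq, hΨ]
    exact (pow_eq_one_iff_of_nonneg (nrm_nonneg Ψ) two_ne_zero).1 this
  set P := vecMulVec Ψ (star Ψ) with hP
  have hPv : ∀ u, P *ᵥ u = (star Ψ ⬝ᵥ u) • Ψ := fun u => by
    rw [hP, vecMulVec_mulVec]; ext i; simp [mul_comm]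
  set DH := H *ᵥ Ψ - (star Ψ ⬝ᵥ (H *ᵥ Ψ)) • Ψ with hDH
  set DL : ι → n → ℂ := fun α => (star Ψ ⬝ᵥ ((L α)ᴴ *ᵥ Ψ)) • (L α *ᵥ Ψ)
    - (2:ℂ)⁻¹ • ((L α)ᴴ *ᵥ (L α *ᵥ Ψ))
    - (2:ℂ)⁻¹ • ((star Ψ ⬝ᵥ ((L α)ᴴ *ᵥ (L α *ᵥ Ψ))) • Ψ) with hDL
  have hX : lindblad H L P *ᵥ Ψ = -Complex.I • DH + ∑ α, DL α := by
    simp only [lindblad, add_mulVec, smul_mulVec, sub_mulVec, sum_mulVec, ← mulVec_mulVec, hPv,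
      hΨ1, mulVec_smul, one_smul, hDH, hDL]
  have hDHn : nrm DH ≤ opNorm H := by
    refine (nrm_proj_le hΨ1 _).trans ((nrm_mulVec_le _ _).trans ?_)
    rw [hn, mul_one]
  have hDH0 : star Ψ ⬝ᵥ DH = 0 := by
    rw [hDH, dotProduct_sub, dotProduct_smul, hΨ1]; simp
  have hDLn : ∀ α, nrm (DL α) ≤ 2 * opNorm (L α) ^ 2 := by
    intro α
    have o := opNorm_nonneg (L α)
    have h1 : nrm (L α *ᵥ Ψ) ≤ opNorm (L α) := by
      have := nrm_mulVec_le (L α) Ψ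
      rwa [hn, mul_one] at this
    have h2 : nrm ((L α)ᴴ *ᵥ Ψ) ≤ opNorm (L α) := by
      have := nrm_mulVec_le (L α)ᴴ Ψ
      rwa [hn, mul_one, opNorm_conjTranspose] at this
    have h3 : nrm ((L α)ᴴ *ᵥ (L α *ᵥ Ψ)) ≤ opNorm (L α) ^ 2 := by
      have := nrm_mulVec_le (L α)ᴴ (L α *ᵥ Ψ)
      rw [opNorm_conjTranspose] at this
      rw [sq]
      exact this.trans (mul_le_mul_of_nonneg_left h1 o)
    have h4 : ‖star Ψ ⬝ᵥ ((L α)ᴴ *ᵥ Ψ)‖ ≤ opNorm (L α) := by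
      have := norm_dot_le Ψ ((L α)ᴴ *ᵥ Ψ)
      rw [hn, one_mul] at this; exact this.trans h2
    have h5 : ‖star Ψ ⬝ᵥ ((L α)ᴴ *ᵥ (L α *ᵥ Ψ))‖ ≤ opNorm (L α) ^ 2 := by
      have := norm_dot_le Ψ ((L α)ᴴ *ᵥ (L α *ᵥ Ψ))
      rw [hn, one_mul] at this; exact this.trans h3
    have hhalf : ‖(2:ℂ)⁻¹‖ = 1 / 2 := by norm_num
    have h6 := nrm_sub_le ((star Ψ ⬝ᵥ ((L α)ᴴ *ᵥ Ψ)) • (L α *ᵥ Ψ)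
      - (2:ℂ)⁻¹ • ((L α)ᴴ *ᵥ (L α *ᵥ Ψ)))
      ((2:ℂ)⁻¹ • ((star Ψ ⬝ᵥ ((L α)ᴴ *ᵥ (L α *ᵥ Ψ))) • Ψ))
    have h7 := nrm_sub_le ((star Ψ ⬝ᵥ ((L α)ᴴ *ᵥ Ψ)) • (L α *ᵥ Ψ))
      ((2:ℂ)⁻¹ • ((L α)ᴴ *ᵥ (L α *ᵥ Ψ)))
    simp only [nrm_smul, hhalf, hn, mul_one] at h6 h7
    have h8 : ‖star Ψ ⬝ᵥ ((L α)ᴴ *ᵥ Ψ)‖ * nrm (L α *ᵥ Ψ) ≤ opNorm (L α) ^ 2 := by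
      rw [sq]; exact mul_le_mul h4 h1 (nrm_nonneg _) o
    simp only [hDL]
    linarith
  have hSn : nrm (∑ α, DL α) ≤ 2 * ∑ α, opNorm (L α) ^ 2 := by
    rw [Finset.mul_sum]
    exact (nrm_sum_le _).trans (Finset.sum_le_sum fun α _ => hDLn α)
  have hq : qf (lindblad H L P) Ψ = (star Ψ ⬝ᵥ ∑ α, DL α).re := by
    rw [qf, hX, dotProduct_add, dotProduct_smul, hDH0]; simp
  have hqn : |qf (lindblad H L P) Ψ| ≤ 2 * ∑ α, opNorm (L α) ^ 2 := by
    rw [hq]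
    refine (Complex.abs_re_le_norm _).trans ((norm_dot_le _ _).trans ?_)
    rwa [hn, one_mul]
  refine ⟨(neg_le_abs _).trans hqn, ?_⟩
  rw [hX]
  have h1 := nrm_sub_le (-Complex.I • DH + ∑ α, DL α) (((qf (lindblad H L P) Ψ : ℝ) : ℂ) • Ψ)
  have h2 := nrm_add_le (-Complex.I • DH) (∑ α, DL α)
  rw [nrm_smul, Complex.norm_real, hn, mul_one, Real.norm_eq_abs] at h1
  rw [nrm_smul, norm_neg, Complex.norm_I, one_mul] at h2
  linarith

open Filter Topology in
lemma final_limit {a N : ℝ → ℝ} {r K ld M : ℝ} (hK : 0 ≤ K)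
    (ha : Tendsto (fun t => (1 - a t) / t) (𝓝[>] 0) (𝓝 r))
    (hN : Tendsto (fun t => N t / t ^ 2) (𝓝[>] 0) (𝓝 (K ^ 2))) :
    Tendsto a (𝓝[>] 0) (𝓝 1) ∧
    Tendsto (fun t => ((1 - a t) * ld - Real.log (1 - t ^ 2)
      + 4 * ld * Real.sqrt (N t / (2 * a t - 1) ^ 2 * (1 + N t / (2 * a t - 1) ^ 2))
      + N t / (2 * a t - 1) ^ 2 * (1 + N t / (2 * a t - 1) ^ 2) * (M - Real.log (t ^ 2))) / t)
      (𝓝[>] 0) (𝓝 (r * ld + 4 * ld * K)) := by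
  have hid : Tendsto (fun t : ℝ => t) (𝓝[>] 0) (𝓝 0) := tendsto_id.mono_left nhdsWithin_le_nhds
  have hpos : ∀ᶠ t : ℝ in 𝓝[>] 0, 0 < t := eventually_mem_nhdsWithin
  have ha1 : Tendsto a (𝓝[>] 0) (𝓝 1) := by
    have h := (ha.mul hid).const_sub 1
    rw [mul_zero, sub_zero] at h
    refine h.congr' ?_
    filter_upwards [hpos] with t ht
    field_simp; ring
  refine ⟨ha1, ?_⟩
  have hden : Tendsto (fun t => (2 * a t - 1) ^ 2) (𝓝[>] 0) (𝓝 1) := by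
    have := ((ha1.const_mul 2).sub_const 1).pow 2
    norm_num at this; exact this
  have hG : Tendsto (fun t => N t / (2 * a t - 1) ^ 2 / t ^ 2) (𝓝[>] 0) (𝓝 (K ^ 2)) := by
    have := hN.div hden one_ne_zero
    rw [div_one] at this
    refine this.congr fun t => ?_
    simp only [Pi.div_apply]
    rw [div_right_comm]
  have hG0 : Tendsto (fun t => N t / (2 * a t - 1) ^ 2) (𝓝[>] 0) (𝓝 0) := by
    have h := hG.mul (hid.pow 2)
    norm_num at h
    refine h.congr' ?_
    filter_upwards [hpos] with t ht
    rw [div_mul_cancel₀ _ (by positivity)]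
  have hGG : Tendsto (fun t => N t / (2 * a t - 1) ^ 2 / t ^ 2 * (1 + N t / (2 * a t - 1) ^ 2))
      (𝓝[>] 0) (𝓝 (K ^ 2)) := by
    have h := hG.mul (hG0.const_add 1)
    rwa [add_zero, mul_one] at h
  have hsq : Tendsto (fun t => Real.sqrt (N t / (2 * a t - 1) ^ 2 / t ^ 2
      * (1 + N t / (2 * a t - 1) ^ 2))) (𝓝[>] 0) (𝓝 K) := by
    have := (Real.continuous_sqrt.tendsto _).comp hGG
    rwa [Real.sqrt_sq hK] at this
  have hlog1 : Tendsto (fun t : ℝ => Real.log (1 - t ^ 2) / t) (𝓝[>] 0) (𝓝 0) := by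
    have hd : HasDerivAt (fun t : ℝ => Real.log (1 - t ^ 2)) 0 0 := by
      have h1 : HasDerivAt (fun t : ℝ => 1 - t ^ 2) 0 0 := by
        have := ((hasDerivAt_id (0:ℝ)).pow 2).const_sub 1
        simpa using this
      have := h1.log (by norm_num)
      simpa using this
    have := hd.tendsto_slope_zero_right
    simp only [zero_add, ne_eq, OfNat.ofNat_ne_zero, not_false_eq_true, zero_pow, sub_zero,
      Real.log_one, smul_eq_mul] at this
    refine this.congr fun t => ?_
    rw [div_eq_inv_mul]
  have hlog2 : Tendsto (fun t : ℝ => t * (M - Real.log (t ^ 2))) (𝓝[>] 0) (𝓝 0) := by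
    have h1 := tendsto_log_mul_rpow_nhdsGT_zero (r := 1) one_pos
    have h2 := (hid.mul_const M).sub (h1.const_mul 2)
    rw [zero_mul, mul_zero, sub_zero] at h2
    refine h2.congr fun t => ?_
    rw [Real.log_pow, Real.rpow_one]; push_cast; ring
  have htot := (((ha.mul_const ld).sub hlog1).add (hsq.const_mul (4 * ld))).add (hGG.mul hlog2)
  rw [mul_zero, add_zero, sub_zero] at htot
  refine htot.congr' ?_
  filter_upwards [hpos] with t ht
  set G := N t / (2 * a t - 1) ^ 2 with hGdef
  have e : Real.sqrt (G / t ^ 2 * (1 + G)) = Real.sqrt (G * (1 + G)) / t := by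
    rw [div_mul_eq_mul_div, Real.sqrt_div' _ (by positivity), Real.sqrt_sq ht.le]
  rw [e]
  field_simp

end SIE8

open Filter Topology in
theorem small_incremental_entangling_relEnt {dA dB m : ℕ}
    (H : Matrix (Fin dA × Fin dB) (Fin dA × Fin dB) ℂ) (hH : H.IsHermitian)
    (L : Fin m → Matrix (Fin dA × Fin dB) (Fin dA × Fin dB) ℂ)
    (Ψ : Fin dA × Fin dB → ℂ) (hΨ : ∑ i, Complex.normSq (Ψ i) = 1)
    (ρ : ℝ → Matrix (Fin dA × Fin dB) (Fin dA × Fin dB) ℂ)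
    (h0 : ρ 0 = Matrix.vecMulVec Ψ (star Ψ))
    (hdyn : ∀ t i j, HasDerivAt (fun s => ρ s i j) (lindblad H L (ρ t) i j) t) :
    ∀ ε > 0, ∃ δ > 0, ∀ Δt, 0 < Δt → Δt < δ →
      (relEntEntanglement (ρ Δt) - relEntEntanglement (ρ 0)) / Δt ≤
        4 * (opNorm H + 86 * ∑ α, (opNorm (L α)) ^ 2) * Real.log (min dA dB : ℕ) + ε := by
  intro ε hε
  obtain ⟨S, M, hS, hbound⟩ := static_bound hΨ
  have hΨ1 : star Ψ ⬝ᵥ Ψ = 1 := by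
    simp only [dotProduct, Pi.star_apply, star_mul_self_normSq]
    exact_mod_cast hΨ
  have hden0 : IsDensityMatrix (ρ 0) := by
    rw [h0]
    refine ⟨posSemidef_vecMulVec_self_star _, ?_⟩
    rw [trace_vecMulVec]
    simp only [dotProduct, Pi.star_apply, mul_star_self_normSq]
    exact_mod_cast hΨ
  have hdens : ∀ t, 0 ≤ t → IsDensityMatrix (ρ t) := fun t ht => evol_density hH hdyn hden0 ht
  set X := lindblad H L (vecMulVec Ψ (star Ψ)) with hX
  obtain ⟨hr, hK⟩ := generator_bounds hH L hΨ
  rw [← hX] at hr hK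
  set x := qf X Ψ with hx
  set χ := X *ᵥ Ψ - ((x : ℝ) : ℂ) • Ψ with hχ
  have ha0 : qf (ρ 0) Ψ = 1 := by rw [h0, qf_vecMulVec, hΨ1]; simp
  have hda : HasDerivAt (fun t => qf (ρ t) Ψ) x 0 := by
    have := qf_hasDerivAt (X := fun s => lindblad H L (ρ s)) (hdyn 0) Ψ
    rw [h0] at this
    exact this
  have hA : Tendsto (fun t => (1 - qf (ρ t) Ψ) / t) (𝓝[>] 0) (𝓝 (-x)) := by
    have := hda.tendsto_slope_zero_right.neg
    simp only [zero_add, ha0, smul_eq_mul] at this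
    refine this.congr fun t => ?_
    rw [div_eq_inv_mul]; ring
  have hN : Tendsto (fun t => (∑ i, Complex.normSq ((ρ t *ᵥ Ψ - ((qf (ρ t) Ψ : ℝ) : ℂ) • Ψ) i)) / t ^ 2)
      (𝓝[>] 0) (𝓝 (nrm χ ^ 2)) := by
    rw [nrm_sq]
    have hi : ∀ i, Tendsto (fun t : ℝ => Complex.normSq ((ρ t *ᵥ Ψ - ((qf (ρ t) Ψ : ℝ) : ℂ) • Ψ) i) / t ^ 2)
        (𝓝[>] 0) (𝓝 (Complex.normSq (χ i))) := by
      intro i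
      have hd : HasDerivAt (fun t => (ρ t *ᵥ Ψ - ((qf (ρ t) Ψ : ℝ) : ℂ) • Ψ) i) (χ i) 0 := by
        simp only [hχ, Pi.sub_apply, Pi.smul_apply, smul_eq_mul]
        refine HasDerivAt.sub ?_ (HasDerivAt.mul_const hda.ofReal_comp _)
        simp only [mulVec, dotProduct]
        refine HasDerivAt.fun_sum fun j _ => HasDerivAt.mul_const ?_ _
        have := hdyn 0 i j
        rw [h0] at this
        exact this
      have hz : (ρ 0 *ᵥ Ψ - ((qf (ρ 0) Ψ : ℝ) : ℂ) • Ψ) i = 0 := by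
        rw [ha0, h0, vecMulVec_mulVec, hΨ1]; simp
      have h1 := hd.tendsto_slope_zero_right
      simp only [zero_add, hz, sub_zero] at h1
      have h2 := (Complex.continuous_normSq.tendsto _).comp h1
      refine h2.congr fun t => ?_
      simp only [Function.comp_apply, Complex.real_smul, Complex.normSq_mul, Complex.normSq_ofReal]
      rw [← mul_inv, ← sq, div_eq_inv_mul]
    have := tendsto_finsetSum Finset.univ fun i _ => hi i
    refine this.congr fun t => ?_
    rw [Finset.sum_div]
  obtain ⟨hlim1, hlim2⟩ := final_limit (ld := Real.log (min dA dB : ℕ)) (M := M) (nrm_nonneg χ) hA hN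
  set ld := Real.log (min dA dB : ℕ) with hld
  have hld0 : 0 ≤ ld := Real.log_natCast_nonneg _
  have hle : -x * ld + 4 * ld * nrm χ
      < 4 * (opNorm H + 86 * ∑ α, (opNorm (L α)) ^ 2) * ld + ε := by
    have hs : 0 ≤ ∑ α, (opNorm (L α)) ^ 2 := Finset.sum_nonneg fun α _ => sq_nonneg _
    have h1 : -x + 4 * nrm χ ≤ 4 * (opNorm H + 86 * ∑ α, (opNorm (L α)) ^ 2) := by linarith
    have h2 := mul_le_mul_of_nonneg_right h1 hld0
    linarith
  have ev1 := hlim2.eventually_lt_const hle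
  have ev2 := hlim1.eventually_const_lt (show (1/2:ℝ) < 1 by norm_num)
  obtain ⟨δ, hδ, hsub⟩ := mem_nhdsGT_iff_exists_Ioo_subset.1 (ev1.and ev2)
  refine ⟨min δ 1, lt_min hδ one_pos, fun t ht htδ => ?_⟩
  have ht1 : t < 1 := htδ.trans_le (min_le_right _ _)
  obtain ⟨e1, e2⟩ := hsub ⟨ht, htδ.trans_le (min_le_left _ _)⟩
  have hpos : 0 < (2 * qf (ρ t) Ψ - 1) ^ 2 := by
    have : 0 < 2 * qf (ρ t) Ψ - 1 := by linarith
    positivity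
  have hb := hbound (ρ t) (hdens t ht.le) e2
    ((∑ i, Complex.normSq ((ρ t *ᵥ Ψ - ((qf (ρ t) Ψ : ℝ) : ℂ) • Ψ) i)) / (2 * qf (ρ t) Ψ - 1) ^ 2)
    (t ^ 2) (by positivity) (by nlinarith) (by rw [div_mul_cancel₀ _ hpos.ne'])
  rw [← h0] at hS
  refine le_trans ?_ e1.le
  refine div_le_div_of_nonneg_right ?_ ht.le
  linarith
end

section
/- Let ρ be a density matrix on H_a ⊗ H_A ⊗ H_B with reduced states ρ_{aAB} = ρ and ρ_{aA} = Tr_B ρ, and assume ρ_{aA} is positive definite. Let H be a Hermitian operator on H_A ⊗ H_B, acting on the full space as I_a ⊗ H. Then i Tr((I_a ⊗ H)[ρ_{aAB}, ln(ρ_{aA} ⊗ (I_B/d_B))]) ≤ 8 ‖H‖ ln d_B, where d_B = dim H_B. -/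
open Matrix Kronecker
open scoped ComplexOrder

/-- An operator `M` on `H_A ⊗ H_B`, extended to `(H_a ⊗ H_A) ⊗ H_B` as `I_a ⊗ M`. -/
noncomputable def liftA {da dA dB : ℕ}
    (M : Matrix (Fin dA × Fin dB) (Fin dA × Fin dB) ℂ) :
    Matrix ((Fin da × Fin dA) × Fin dB) ((Fin da × Fin dA) × Fin dB) ℂ :=
  Matrix.of fun p q => if p.1.1 = q.1.1 then M (p.1.2, p.2) (q.1.2, q.2) else 0

section Aux

open scoped MatrixOrder Matrix.Norms.L2Operator

variable {n : Type*} [Fintype n] [DecidableEq n]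

lemma aux_mlog_eq {A : Matrix n n ℂ} (hA : A.IsHermitian) : mlog A = CFC.log A := by
  rw [CFC.log, hA.cfc_eq, mlog, dif_pos hA, Matrix.IsHermitian.cfc, Unitary.conjStarAlgAut_apply]
  rfl

lemma aux_mulVec_sq (Z : Matrix n n ℂ) (v : n → ℂ) :
    ∑ i, ‖(Z *ᵥ v) i‖ ^ 2 ≤ ‖Z‖ ^ 2 * ∑ i, ‖v i‖ ^ 2 := by
  have h := Matrix.l2_opNorm_mulVec Z (WithLp.toLp 2 v)
  have h2 := pow_le_pow_left₀ (norm_nonneg _) h 2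
  rw [mul_pow, EuclideanSpace.norm_sq_eq, EuclideanSpace.norm_sq_eq] at h2
  simpa using h2

lemma aux_col_sq (Z : Matrix n n ℂ) (j : n) : ∑ i, ‖Z i j‖ ^ 2 ≤ ‖Z‖ ^ 2 := by
  have h := aux_mulVec_sq Z (Pi.single j 1)
  have h3 : ∑ i, ‖(Pi.single j (1 : ℂ) : n → ℂ) i‖ ^ 2 = 1 := by
    rw [Finset.sum_eq_single j] <;> simp +contextual
  rw [h3] at h
  simpa using h

lemma aux_row_sq (Z : Matrix n n ℂ) (i : n) : ∑ j, ‖Z i j‖ ^ 2 ≤ ‖Z‖ ^ 2 := by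
  have h := aux_col_sq Zᴴ i
  rw [Matrix.l2_opNorm_conjTranspose] at h
  simpa using h

lemma aux_cs (f g : n → ℝ) {a b : ℝ} (ha : 0 ≤ a) (hb : 0 ≤ b)
    (hf : ∑ i, f i ^ 2 ≤ a ^ 2) (hg : ∑ i, g i ^ 2 ≤ b ^ 2) : ∑ i, f i * g i ≤ a * b := by
  refine (Real.sum_mul_le_sqrt_mul_sqrt _ f g).trans ?_
  exact mul_le_mul (Real.sqrt_le_iff.2 ⟨ha, hf⟩) (Real.sqrt_le_iff.2 ⟨hb, hg⟩)
    (Real.sqrt_nonneg _) ha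

lemma aux_quad (Z : Matrix n n ℂ) (v : n → ℂ) :
    ‖star v ⬝ᵥ (Z *ᵥ v)‖ ≤ ‖Z‖ * ∑ i, ‖v i‖ ^ 2 := by
  have h0 : 0 ≤ ∑ i, ‖v i‖ ^ 2 := by positivity
  have h1 : ‖star v ⬝ᵥ (Z *ᵥ v)‖ ≤ ∑ i, ‖v i‖ * ‖(Z *ᵥ v) i‖ := by
    refine (norm_sum_le _ _).trans (le_of_eq ?_)
    simp
  refine h1.trans ((aux_cs _ _ (Real.sqrt_nonneg (∑ i, ‖v i‖ ^ 2))
    (b := ‖Z‖ * Real.sqrt (∑ i, ‖v i‖ ^ 2)) (by positivity) ?_ ?_).trans ?_)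
  · rw [Real.sq_sqrt h0]
  · rw [mul_pow, Real.sq_sqrt h0]; exact aux_mulVec_sq Z v
  · rw [mul_left_comm, Real.mul_self_sqrt h0]

lemma aux_trace_mul {ρ : Matrix n n ℂ} (hρ : ρ.PosSemidef) (Z : Matrix n n ℂ) :
    ‖(ρ * Z).trace‖ ≤ ‖Z‖ * ρ.trace.re := by
  obtain ⟨B, rfl⟩ := CStarAlgebra.nonneg_iff_eq_star_mul_self.mp hρ.nonneg
  rw [Matrix.star_eq_conjTranspose]
  have h1 : (Bᴴ * B * Z).trace = ∑ i, star (Bᴴ.col i) ⬝ᵥ (Z *ᵥ (Bᴴ.col i)) := by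
    rw [Matrix.mul_assoc, Matrix.trace_mul_comm, Matrix.mul_assoc, Matrix.trace]
    refine Finset.sum_congr rfl fun i _ => ?_
    simp [Matrix.mul_apply, dotProduct, Matrix.mulVec]
  have h2 : (Bᴴ * B).trace.re = ∑ i, ∑ j, ‖(Bᴴ.col i) j‖ ^ 2 := by
    rw [Matrix.trace_mul_comm, Matrix.trace]
    simp [Matrix.mul_apply, Complex.mul_conj, Complex.normSq_eq_norm_sq, ← Complex.ofReal_pow]
  rw [h1, h2, Finset.mul_sum]
  exact (norm_sum_le _ _).trans (Finset.sum_le_sum fun i _ => aux_quad _ _)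

lemma aux_log_mean {a b : ℝ} (ha : 0 < a) (hb : 0 < b) :
    Real.sqrt a * Real.sqrt b * |Real.log b - Real.log a| ≤ a + b := by
  have hsa := Real.sqrt_pos.2 ha
  have hsb := Real.sqrt_pos.2 hb
  have key : ∀ x y : ℝ, 0 < x → 0 < y →
      x * y * (Real.log (y ^ 2) - Real.log (x ^ 2)) ≤ x ^ 2 + y ^ 2 := by
    intro x y hx hy
    have h := Real.log_le_sub_one_of_pos (div_pos (div_pos hy hx) two_pos)
    rw [Real.log_div (div_pos hy hx).ne' two_ne_zero, Real.log_div hy.ne' hx.ne'] at h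
    have h0 := Real.log_two_lt_d9
    have h' : Real.log y - Real.log x ≤ y / x / 2 := by linarith
    rw [Real.log_pow, Real.log_pow]
    have h2 : x * y * (Real.log y - Real.log x) ≤ x * y * (y / x / 2) :=
      mul_le_mul_of_nonneg_left h' (by positivity)
    have h3 : x * y * (y / x / 2) = y ^ 2 / 2 := by field_simp
    push_cast
    nlinarith [sq_nonneg x]
  have k1 := key _ _ hsa hsb
  have k2 := key _ _ hsb hsa
  rw [Real.sq_sqrt ha.le, Real.sq_sqrt hb.le] at k1 k2
  rcases abs_cases (Real.log b - Real.log a) with ⟨h, _⟩ | ⟨h, _⟩ <;> rw [h] <;> linarith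

lemma aux_conj_diag {A : Matrix n n ℂ} (hA : A.PosSemidef) (m : n → ℝ) (hm : ∀ i, 0 < m i)
    (hAm : A ≤ Matrix.diagonal (fun i => (m i : ℂ))) :
    ∃ C : Matrix n n ℂ, ‖C‖ ≤ 1 ∧
      ∀ i j, A i j = (Real.sqrt (m i) : ℂ) * (Real.sqrt (m j) : ℂ) * C i j := by
  have hs : ∀ i, (Real.sqrt (m i) : ℂ) ≠ 0 := fun i => by
    exact_mod_cast (Real.sqrt_pos.2 (hm i)).ne'
  have hss : ∀ i, (m i : ℂ) = (Real.sqrt (m i) : ℂ) * (Real.sqrt (m i) : ℂ) := fun i => by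
    exact_mod_cast (Real.mul_self_sqrt (hm i).le).symm
  set S : Matrix n n ℂ := Matrix.diagonal (fun i => ((Real.sqrt (m i) : ℂ))⁻¹) with hS
  have hSs : star S = S := by
    rw [hS, Matrix.star_eq_conjTranspose, Matrix.diagonal_conjTranspose]
    congr 1; ext i; simp
  refine ⟨S * A * S, ?_, ?_⟩
  · have h0 : 0 ≤ S * A * S := by
      have := star_left_conjugate_nonneg (Matrix.nonneg_iff_posSemidef.2 hA) S
      rwa [hSs] at this
    have h1 : S * A * S ≤ 1 := by
      have := star_left_conjugate_le_conjugate hAm S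
      rw [hSs] at this
      refine this.trans (le_of_eq ?_)
      rw [hS, Matrix.diagonal_mul_diagonal, Matrix.diagonal_mul_diagonal, ← Matrix.diagonal_one]
      congr 1; ext i
      rw [hss i]; field_simp [hs i]
    exact (CStarAlgebra.norm_le_one_iff_of_nonneg _ h0).2 h1
  · intro i j
    rw [hS, Matrix.mul_diagonal, Matrix.diagonal_mul]
    field_simp [hs i, hs j]

lemma aux_core_diag {A : Matrix n n ℂ} (hA : A.PosSemidef) (m : n → ℝ) (hm : ∀ i, 0 < m i)
    (hAm : A ≤ Matrix.diagonal (fun i => (m i : ℂ))) (G : Matrix n n ℂ) :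
    ‖(G * (A * Matrix.diagonal (fun i => (Real.log (m i) : ℂ))
      - Matrix.diagonal (fun i => (Real.log (m i) : ℂ)) * A)).trace‖ ≤ 2 * ‖G‖ * ∑ i, m i := by
  obtain ⟨C, hC, hAC⟩ := aux_conj_diag hA m hm hAm
  have e : ∀ i j, (A * Matrix.diagonal (fun i => (Real.log (m i) : ℂ))
      - Matrix.diagonal (fun i => (Real.log (m i) : ℂ)) * A) i j =
      A i j * ((Real.log (m j) - Real.log (m i) : ℝ) : ℂ) := by
    intro i j
    rw [Matrix.sub_apply, Matrix.mul_diagonal, Matrix.diagonal_mul]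
    push_cast; ring
  have hb : ∀ i j, ‖A i j * ((Real.log (m j) - Real.log (m i) : ℝ) : ℂ)‖ ≤
      (m i + m j) * ‖C i j‖ := by
    intro i j
    rw [hAC i j]
    simp only [norm_mul, Complex.norm_real, Real.norm_eq_abs, abs_of_nonneg (Real.sqrt_nonneg _)]
    have := mul_le_mul_of_nonneg_right (aux_log_mean (hm i) (hm j)) (norm_nonneg (C i j))
    linarith
  have h1 : ‖(G * (A * Matrix.diagonal (fun i => (Real.log (m i) : ℂ))
      - Matrix.diagonal (fun i => (Real.log (m i) : ℂ)) * A)).trace‖ ≤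
      ∑ i, ∑ j, (‖G i j‖ * ((m j + m i) * ‖C j i‖)) := by
    rw [Matrix.trace]
    refine (norm_sum_le _ _).trans (Finset.sum_le_sum fun i _ => ?_)
    rw [Matrix.diag_apply, Matrix.mul_apply]
    refine (norm_sum_le _ _).trans (Finset.sum_le_sum fun j _ => ?_)
    rw [norm_mul, e]
    exact mul_le_mul_of_nonneg_left (hb j i) (norm_nonneg _)
  have hC' : ∀ i, ∑ j, ‖C i j‖ ^ 2 ≤ 1 ^ 2 := fun i =>
    (aux_row_sq C i).trans (pow_le_pow_left₀ (norm_nonneg _) hC 2)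
  have hC'' : ∀ i, ∑ j, ‖C j i‖ ^ 2 ≤ 1 ^ 2 := fun i =>
    (aux_col_sq C i).trans (pow_le_pow_left₀ (norm_nonneg _) hC 2)
  have h2 : ∑ i, ∑ j, (‖G i j‖ * ((m j + m i) * ‖C j i‖)) =
      ∑ j, m j * ∑ i, ‖G i j‖ * ‖C j i‖ + ∑ i, m i * ∑ j, ‖G i j‖ * ‖C j i‖ := by
    simp only [Finset.mul_sum]
    rw [Finset.sum_comm (f := fun j i => m j * (‖G i j‖ * ‖C j i‖)), ← Finset.sum_add_distrib]
    refine Finset.sum_congr rfl fun i _ => ?_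
    rw [← Finset.sum_add_distrib]
    refine Finset.sum_congr rfl fun j _ => ?_
    ring
  have h3 : ∑ j, m j * ∑ i, ‖G i j‖ * ‖C j i‖ ≤ ∑ j, m j * (‖G‖ * 1) :=
    Finset.sum_le_sum fun j _ => mul_le_mul_of_nonneg_left
      (aux_cs _ _ (norm_nonneg _) zero_le_one (aux_col_sq G j) (hC' j)) (hm j).le
  have h4 : ∑ i, m i * ∑ j, ‖G i j‖ * ‖C j i‖ ≤ ∑ j, m j * (‖G‖ * 1) :=
    Finset.sum_le_sum fun j _ => mul_le_mul_of_nonneg_left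
      (aux_cs _ _ (norm_nonneg _) zero_le_one (aux_row_sq G j) (hC'' j)) (hm j).le
  rw [← Finset.sum_mul] at h3 h4
  rw [h2] at h1
  linarith

lemma aux_core {A M : Matrix n n ℂ} (hA : A.PosSemidef) (hM : M.PosDef) (hAM : A ≤ M)
    (G : Matrix n n ℂ) :
    ‖(G * (A * mlog M - mlog M * A)).trace‖ ≤ 2 * ‖G‖ * M.trace.re := by
  have hH := hM.isHermitian
  set U : Matrix n n ℂ := (hH.eigenvectorUnitary : Matrix n n ℂ) with hU
  have hUU : star U * U = 1 := Unitary.coe_star_mul_self _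
  have hUU' : U * star U = 1 := Unitary.coe_mul_star_self _
  have hsp : M = U * Matrix.diagonal (fun i => (hH.eigenvalues i : ℂ)) * star U := by
    conv_lhs => rw [hH.spectral_theorem, Unitary.conjStarAlgAut_apply]
    rfl
  have hlog : mlog M = U * Matrix.diagonal (fun i => (Real.log (hH.eigenvalues i) : ℂ)) * star U := by
    rw [mlog, dif_pos hH]
  have htr : M.trace.re = ∑ i, hH.eigenvalues i := by
    rw [hH.trace_eq_sum_eigenvalues]; simp
  set D := Matrix.diagonal (fun i => (Real.log (hH.eigenvalues i) : ℂ)) with hD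
  have hA' : (star U * A * U).PosSemidef :=
    Matrix.nonneg_iff_posSemidef.1
      (star_left_conjugate_nonneg (Matrix.nonneg_iff_posSemidef.2 hA) U)
  have hle : star U * A * U ≤ Matrix.diagonal (fun i => (hH.eigenvalues i : ℂ)) := by
    refine (star_left_conjugate_le_conjugate hAM U).trans (le_of_eq ?_)
    conv_lhs => rw [hsp]
    calc _ = (star U * U) * Matrix.diagonal (fun i => (hH.eigenvalues i : ℂ)) * (star U * U) := by
          simp only [Matrix.mul_assoc]
      _ = _ := by rw [hUU]; simp
  have h := aux_core_diag hA' _ hM.eigenvalues_pos hle (star U * G * U)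
  have hn : ‖star U * G * U‖ = ‖G‖ := by
    rw [CStarRing.norm_mul_coe_unitary, ← Unitary.coe_star, CStarRing.norm_coe_unitary_mul]
  rw [hn, ← hD, ← htr] at h
  refine (le_of_eq ?_).trans h
  congr 1
  have : star U * G * U * (star U * A * U * D - D * (star U * A * U)) =
      star U * (G * (A * mlog M - mlog M * A) * U) := by
    rw [hlog]
    have e1 : ∀ X : Matrix n n ℂ, U * (star U * X) = X := fun X => by
      rw [← Matrix.mul_assoc, hUU', Matrix.one_mul]
    simp only [Matrix.mul_sub, Matrix.sub_mul, Matrix.mul_assoc, e1, hUU, Matrix.mul_one]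
  rw [this, Matrix.trace_mul_comm (star U), Matrix.mul_assoc _ U, hUU', Matrix.mul_one]

lemma aux_sa_norm {Y : Matrix n n ℂ} (hY : IsSelfAdjoint Y) {c : ℝ} (hc : 0 ≤ c)
    (h1 : algebraMap ℝ (Matrix n n ℂ) (-c) ≤ Y) (h2 : Y ≤ algebraMap ℝ (Matrix n n ℂ) c) :
    ‖Y‖ ≤ c := by
  rw [le_algebraMap_iff_spectrum_le] at h2
  rw [algebraMap_le_iff_le_spectrum] at h1
  rw [← cfc_id ℝ Y]
  exact norm_cfc_le hc fun x hx => abs_le.2 ⟨h1 x hx, h2 x hx⟩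

lemma aux_main {ρ σ : Matrix n n ℂ} (hρ : ρ.PosSemidef) (hρt : ρ.trace = 1) (hσ : σ.PosDef)
    (hσt : σ.trace = 1) {K : ℝ} (hK : 0 < K) (hle : ρ ≤ K • σ) (G : Matrix n n ℂ) :
    ‖(G * (ρ * mlog σ - mlog σ * ρ)).trace‖ ≤ ‖G‖ * (Real.log (2 * K + 1) + 3) := by
  have hρ0 : 0 ≤ ρ := hρ.nonneg
  have hσ' : IsStrictlyPositive σ := Matrix.isStrictlyPositive_iff_posDef.2 hσ
  have hσ0 : 0 ≤ σ := hσ'.nonneg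
  set M : Matrix n n ℂ := ρ + (1 / 2 : ℝ) • σ with hMdef
  have hhalf : ((1 / 2 : ℝ) • σ).PosDef := hσ.smul (by norm_num)
  have hM : M.PosDef := Matrix.PosDef.posSemidef_add hρ hhalf
  have hhalf' : IsStrictlyPositive ((1 / 2 : ℝ) • σ) := Matrix.isStrictlyPositive_iff_posDef.2 hhalf
  have hM' : IsStrictlyPositive M := Matrix.isStrictlyPositive_iff_posDef.2 hM
  have b1 : (1 / 2 : ℝ) • σ ≤ M := le_add_of_nonneg_left hρ0
  have b2 : M ≤ (K + 1 / 2) • σ := by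
    rw [add_smul, hMdef]; gcongr
  have b3 : ρ ≤ M := le_add_of_nonneg_right hhalf'.nonneg
  have l1 := CFC.log_le_log b1 hhalf'
  have l2 := CFC.log_le_log b2 hM'
  rw [CFC.log_smul' σ (by norm_num) hσ'] at l1
  rw [CFC.log_smul' σ (by positivity) hσ'] at l2
  have e0 : Real.log (K + 1 / 2) = Real.log (2 * K + 1) + Real.log (1 / 2) := by
    rw [← Real.log_mul (by positivity) (by norm_num)]; congr 1; ring
  set r : ℝ := Real.log (2 * K + 1) with hr
  have hr0 : 0 ≤ r := Real.log_nonneg (by linarith)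
  set h : ℝ := Real.log (1 / 2) with hh
  set Y : Matrix n n ℂ := CFC.log M - CFC.log σ - algebraMap ℝ (Matrix n n ℂ) (r / 2 + h) with hYd
  have hY : ‖Y‖ ≤ r / 2 := by
    refine aux_sa_norm ?_ (by linarith) ?_ ?_
    · exact (IsSelfAdjoint.log.sub IsSelfAdjoint.log).sub (IsSelfAdjoint.algebraMap _ (.all _))
    · rw [hYd, le_sub_iff_add_le, ← map_add, le_sub_iff_add_le]
      convert l1 using 3; ring
    · rw [hYd, sub_le_iff_le_add, ← map_add, sub_le_iff_le_add]
      convert l2 using 3; rw [e0]; ring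
  have t1 := aux_core hρ hM b3 G
  have hMt : M.trace.re = 3 / 2 := by
    rw [hMdef, Matrix.trace_add, Matrix.trace_smul, hρt, hσt]; norm_num
  rw [hMt, aux_mlog_eq hM.isHermitian] at t1
  have t2 := aux_trace_mul hρ (Y * G - G * Y)
  rw [hρt, Complex.one_re, mul_one] at t2
  have t3 : ‖Y * G - G * Y‖ ≤ r * ‖G‖ := by
    have a1 := norm_mul_le Y G
    have a2 := norm_mul_le G Y
    have a3 := norm_sub_le (Y * G) (G * Y)
    nlinarith [norm_nonneg G, norm_nonneg Y]
  rw [aux_mlog_eq hσ.isHermitian]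
  have e : (G * (ρ * CFC.log σ - CFC.log σ * ρ)).trace =
      (G * (ρ * CFC.log M - CFC.log M * ρ)).trace - (ρ * (Y * G - G * Y)).trace := by
    have e1 : CFC.log σ = CFC.log M - Y - algebraMap ℝ (Matrix n n ℂ) (r / 2 + h) := by
      rw [hYd]; abel
    have e2 : ρ * CFC.log σ - CFC.log σ * ρ =
        (ρ * CFC.log M - CFC.log M * ρ) - (ρ * Y - Y * ρ) := by
      rw [e1, Matrix.mul_sub, Matrix.mul_sub, Matrix.sub_mul, Matrix.sub_mul,
        Algebra.commutes (r / 2 + h) ρ]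
      abel
    clear_value Y
    have e3 : (ρ * (Y * G - G * Y)).trace = (G * (ρ * Y - Y * ρ)).trace := by
      rw [Matrix.mul_sub, Matrix.mul_sub, Matrix.trace_sub, Matrix.trace_sub,
        Matrix.trace_mul_comm G (ρ * Y), Matrix.mul_assoc, Matrix.trace_mul_comm ρ (G * Y),
        Matrix.mul_assoc G Y ρ]
    rw [e2, Matrix.mul_sub, Matrix.trace_sub, e3]
  rw [e]
  refine (norm_sub_le _ _).trans ?_
  linarith

/-- `liftA` as a star algebra homomorphism. -/
noncomputable def auxLift (da dA dB : ℕ) :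
    Matrix (Fin dA × Fin dB) (Fin dA × Fin dB) ℂ →⋆ₙₐ[ℂ]
      Matrix ((Fin da × Fin dA) × Fin dB) ((Fin da × Fin dA) × Fin dB) ℂ where
  toFun M := liftA M
  map_smul' c M := by ext i j; simp [liftA]
  map_zero' := by ext i j; simp [liftA]
  map_add' M N := by
    ext i j
    simp only [liftA, Matrix.of_apply, Matrix.add_apply]
    split_ifs <;> simp
  map_mul' M N := by
    ext ⟨⟨i, k⟩, b⟩ ⟨⟨j, l⟩, c⟩
    simp only [liftA, Matrix.of_apply, Matrix.mul_apply, Fintype.sum_prod_type]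
    by_cases hij : i = j
    · subst hij
      rw [Finset.sum_eq_single i]
      · simp
      · intro x _ hx
        simp [hx]
      · simp
    · rw [if_neg hij]
      symm
      refine Finset.sum_eq_zero fun x _ => Finset.sum_eq_zero fun y _ =>
        Finset.sum_eq_zero fun z _ => ?_
      by_cases h1 : i = x
      · subst h1; simp [hij]
      · simp [h1]
  map_star' M := by
    ext i j
    simp only [liftA, Matrix.of_apply, Matrix.star_apply]
    by_cases h : i.1.1 = j.1.1
    · rw [if_pos h, if_pos h.symm]
    · rw [if_neg h, if_neg (Ne.symm h), star_zero]

lemma aux_lift_norm {da dA dB : ℕ} (H : Matrix (Fin dA × Fin dB) (Fin dA × Fin dB) ℂ) :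
    ‖liftA (da := da) H‖ ≤ opNorm H :=
  NonUnitalStarAlgHom.norm_apply_le (auxLift da dA dB) H

lemma aux_trace_ptrace {m p : Type*} [Fintype m] [Fintype p] (ρ : Matrix (m × p) (m × p) ℂ) :
    (ptraceR ρ).trace = ρ.trace := by
  simp [ptraceR, Matrix.trace, Fintype.sum_prod_type]

lemma aux_reorder {α β γ δ : Type*} [Fintype α] [Fintype β] [Fintype γ] [Fintype δ]
    (g : α → β → γ → δ → ℂ) :
    ∑ i, ∑ j, ∑ c, ∑ k, g i j c k = ∑ k, ∑ c, ∑ i, ∑ j, g i j c k := by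
  calc _ = ∑ i, ∑ j, ∑ k, ∑ c, g i j c k :=
        Finset.sum_congr rfl fun i _ => Finset.sum_congr rfl fun j _ => Finset.sum_comm
    _ = ∑ i, ∑ k, ∑ j, ∑ c, g i j c k := Finset.sum_congr rfl fun i _ => Finset.sum_comm
    _ = ∑ k, ∑ i, ∑ j, ∑ c, g i j c k := Finset.sum_comm
    _ = ∑ k, ∑ i, ∑ c, ∑ j, g i j c k :=
        Finset.sum_congr rfl fun k _ => Finset.sum_congr rfl fun i _ => Finset.sum_comm
    _ = _ := Finset.sum_congr rfl fun k _ => Finset.sum_comm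

lemma aux_comm {ρ : Matrix n n ℂ} (hh : ρ.IsHermitian) : ρ * mlog ρ - mlog ρ * ρ = 0 := by
  have h := (cfc_commute_cfc (R := ℝ) id Real.log ρ).eq
  rw [cfc_id ℝ ρ hh.isSelfAdjoint] at h
  rw [aux_mlog_eq hh, CFC.log, sub_eq_zero]
  exact h

lemma aux_pinch {m p : Type*} [Fintype m] [Fintype p] [DecidableEq m] [DecidableEq p]
    {ρ : Matrix (m × p) (m × p) ℂ} (hρ : ρ.PosSemidef) :
    ρ ≤ (Fintype.card p : ℝ) • (ptraceR ρ ⊗ₖ (1 : Matrix p p ℂ)) := by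
  have hpt : (ptraceR ρ)ᴴ = ptraceR ρ := by
    ext i j
    simp only [ptraceR, Matrix.conjTranspose_apply, Matrix.of_apply, star_sum]
    exact Finset.sum_congr rfl fun b _ => hρ.isHermitian.apply _ _
  have hherm : ((Fintype.card p : ℝ) • (ptraceR ρ ⊗ₖ (1 : Matrix p p ℂ)) - ρ).IsHermitian := by
    refine Matrix.IsHermitian.sub ?_ hρ.isHermitian
    rw [Matrix.IsHermitian, Matrix.conjTranspose_smul, Matrix.conjTranspose_kronecker, hpt]
    simp
  rw [Matrix.le_iff]
  refine Matrix.PosSemidef.of_dotProduct_mulVec_nonneg hherm fun x => ?_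
  obtain ⟨B, hB⟩ := CStarAlgebra.nonneg_iff_eq_star_mul_self.mp hρ.nonneg
  have hBe : ∀ u v, ρ u v = ∑ k, star (B k u) * B k v := fun u v => by
    rw [hB]; simp [Matrix.mul_apply]
  have hsq : ∀ z : ℂ, star z * z = ((‖z‖ ^ 2 : ℝ) : ℂ) := fun z => by
    rw [Complex.star_def, ← Complex.normSq_eq_conj_mul_self, Complex.normSq_eq_norm_sq]
  set f : (m × p) → p → p → ℂ := fun k c b => ∑ i, B k (i, c) * x (i, b) with hf
  have c1 : star x ⬝ᵥ (ρ *ᵥ x) = ((∑ k, ‖∑ b, f k b b‖ ^ 2 : ℝ) : ℂ) := by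
    have hk : ∀ k, (B *ᵥ x) k = ∑ b, f k b b := fun k => by
      rw [Matrix.mulVec, dotProduct, Fintype.sum_prod_type, Finset.sum_comm]
    rw [hB, Matrix.star_eq_conjTranspose, ← Matrix.mulVec_mulVec, Matrix.dotProduct_mulVec,
      ← Matrix.star_mulVec, dotProduct, Complex.ofReal_sum]
    refine Finset.sum_congr rfl fun k _ => ?_
    rw [Pi.star_apply, hsq, hk]
  have c2 : star x ⬝ᵥ ((ptraceR ρ ⊗ₖ (1 : Matrix p p ℂ)) *ᵥ x) =
      ((∑ k, ∑ b, ∑ c, ‖f k c b‖ ^ 2 : ℝ) : ℂ) := by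
    have l : star x ⬝ᵥ ((ptraceR ρ ⊗ₖ (1 : Matrix p p ℂ)) *ᵥ x) =
        ∑ i, ∑ b, ∑ j, ∑ c, ∑ k, star (x (i, b)) * (star (B k (i, c)) * B k (j, c) * x (j, b)) := by
      simp only [dotProduct, Matrix.mulVec, Fintype.sum_prod_type, Pi.star_apply]
      refine Finset.sum_congr rfl fun i _ => Finset.sum_congr rfl fun b _ => ?_
      rw [Finset.mul_sum]
      refine Finset.sum_congr rfl fun j _ => ?_
      rw [Finset.sum_eq_single b]
      · simp [Matrix.kroneckerMap_apply, ptraceR, hBe, Finset.mul_sum, Finset.sum_mul, Fintype.sum_prod_type]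
      · intro y _ hy
        simp [Matrix.kroneckerMap_apply, Ne.symm hy]
      · simp
    have r : ((∑ k, ∑ b, ∑ c, ‖f k c b‖ ^ 2 : ℝ) : ℂ) =
        ∑ k, ∑ b, ∑ c, ∑ i, ∑ j,
          star (x (i, b)) * (star (B k (i, c)) * B k (j, c) * x (j, b)) := by
      simp only [Complex.ofReal_sum, ← hsq]
      refine Finset.sum_congr rfl fun k _ => Finset.sum_congr rfl fun b _ =>
        Finset.sum_congr rfl fun c _ => ?_
      simp only [hf, star_sum, Finset.sum_mul, Finset.mul_sum, star_mul']
      rw [Finset.sum_comm]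
      refine Finset.sum_congr rfl fun i _ => Finset.sum_congr rfl fun j _ => ?_
      ring
    rw [l, r]
    calc _ = ∑ b, ∑ i, ∑ j, ∑ c, ∑ k,
          star (x (i, b)) * (star (B k (i, c)) * B k (j, c) * x (j, b)) := Finset.sum_comm
      _ = ∑ b, ∑ k, ∑ c, ∑ i, ∑ j,
          star (x (i, b)) * (star (B k (i, c)) * B k (j, c) * x (j, b)) := by
        refine Finset.sum_congr rfl fun b _ => ?_
        exact aux_reorder _
      _ = _ := Finset.sum_comm
  rw [Matrix.sub_mulVec, dotProduct_sub, Matrix.smul_mulVec, dotProduct_smul, c1, c2,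
    Complex.real_smul, ← Complex.ofReal_mul, ← Complex.ofReal_sub]
  rw [Complex.zero_le_real, sub_nonneg, Finset.mul_sum]
  refine Finset.sum_le_sum fun k _ => ?_
  have s1 : ‖∑ b, f k b b‖ ^ 2 ≤ (∑ b, ‖f k b b‖) ^ 2 :=
    pow_le_pow_left₀ (norm_nonneg _) (norm_sum_le _ _) 2
  have s2 : (∑ b, ‖f k b b‖) ^ 2 ≤ (Fintype.card p : ℝ) * ∑ b, ‖f k b b‖ ^ 2 := by
    simpa using sq_sum_le_card_mul_sum_sq (s := Finset.univ) (f := fun b => ‖f k b b‖)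
  refine s1.trans (s2.trans (mul_le_mul_of_nonneg_left ?_ (by positivity)))
  refine Finset.sum_le_sum fun b _ => ?_
  exact Finset.single_le_sum (f := fun c => ‖f k c b‖ ^ 2) (fun c _ => by positivity)
    (Finset.mem_univ b)

lemma aux_final {da dA dB : ℕ} (hd : 2 ≤ dB)
    (ρ : Matrix ((Fin da × Fin dA) × Fin dB) ((Fin da × Fin dA) × Fin dB) ℂ)
    (hρ : IsDensityMatrix ρ) (hred : (ptraceR ρ).PosDef)
    (H : Matrix (Fin dA × Fin dB) (Fin dA × Fin dB) ℂ) :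
    ‖((liftA (da := da) H) *
        (ρ * mlog (ptraceR ρ ⊗ₖ (((dB : ℂ))⁻¹ • (1 : Matrix (Fin dB) (Fin dB) ℂ)))
          - mlog (ptraceR ρ ⊗ₖ (((dB : ℂ))⁻¹ • (1 : Matrix (Fin dB) (Fin dB) ℂ))) * ρ)).trace‖ ≤
      8 * opNorm H * Real.log dB := by
  have hd0 : (0 : ℝ) < dB := by exact_mod_cast (by omega : 0 < dB)
  have hdc : (dB : ℂ) ≠ 0 := by exact_mod_cast hd0.ne'
  have hd2 : (2 : ℝ) ≤ dB := by exact_mod_cast hd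
  have hone : (((dB : ℂ))⁻¹ • (1 : Matrix (Fin dB) (Fin dB) ℂ)).PosDef := by
    refine Matrix.PosDef.one.smul ?_
    have : ((dB : ℂ))⁻¹ = (((dB : ℝ)⁻¹ : ℝ) : ℂ) := by simp
    rw [this, Complex.zero_lt_real]
    positivity
  have hσ := hred.kronecker hone
  have hσt : (ptraceR ρ ⊗ₖ (((dB : ℂ))⁻¹ • (1 : Matrix (Fin dB) (Fin dB) ℂ))).trace = 1 := by
    rw [Matrix.trace_kronecker, aux_trace_ptrace, hρ.2, Matrix.trace_smul, Matrix.trace_one]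
    simp [hdc]
  have hle : ρ ≤ ((dB : ℝ) ^ 2) •
      (ptraceR ρ ⊗ₖ (((dB : ℂ))⁻¹ • (1 : Matrix (Fin dB) (Fin dB) ℂ))) := by
    refine (aux_pinch hρ.1).trans (le_of_eq ?_)
    rw [Matrix.kronecker_smul]
    ext i j
    simp only [Matrix.smul_apply, Fintype.card_fin, Complex.real_smul, smul_eq_mul]
    push_cast
    field_simp
  have h := aux_main hρ.1 hρ.2 hσ hσt (by positivity) hle (liftA (da := da) H)
  refine h.trans ?_
  have hn : (0 : ℝ) ≤ opNorm H := norm_nonneg _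
  have hl2 := Real.log_two_gt_d9
  have hl2' := Real.log_two_lt_d9
  have hlog : Real.log 2 ≤ Real.log dB := Real.log_le_log two_pos hd2
  have e1 : Real.log (2 * (dB : ℝ) ^ 2 + 1) ≤ Real.log (9 / 4) + 2 * Real.log dB := by
    have : Real.log (9 / 4) + 2 * Real.log dB = Real.log (9 / 4 * (dB : ℝ) ^ 2) := by
      rw [Real.log_mul (by norm_num) (by positivity), Real.log_pow]; norm_num
    rw [this]
    refine Real.log_le_log (by positivity) (by nlinarith)
  have e2 : Real.log (9 / 4) ≤ 9 / 4 - 2 + Real.log 2 / 2 + 1 / 2 := by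
    have a := Real.log_le_sub_one_of_pos (x := 9 / 8) (by norm_num)
    have b : Real.log (9 / 4) = Real.log (9 / 8) + Real.log 2 := by
      rw [← Real.log_mul (by norm_num) (by norm_num)]; norm_num
    linarith
  have hc : Real.log (2 * (dB : ℝ) ^ 2 + 1) + 3 ≤ 8 * Real.log dB := by linarith
  have hpos : 0 ≤ Real.log (2 * (dB : ℝ) ^ 2 + 1) + 3 := by
    have : 0 ≤ Real.log (2 * (dB : ℝ) ^ 2 + 1) := Real.log_nonneg (by nlinarith)
    linarith
  calc _ ≤ opNorm H * (Real.log (2 * (dB : ℝ) ^ 2 + 1) + 3) :=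
        mul_le_mul_of_nonneg_right (aux_lift_norm H) hpos
    _ ≤ opNorm H * (8 * Real.log dB) := mul_le_mul_of_nonneg_left hc hn
    _ = _ := by ring

end Aux

/-- Hamiltonian part of the mutual-information rate:
`i Tr((I_a ⊗ H)[ρ_{aAB}, ln(ρ_{aA} ⊗ I_B/d_B)]) ≤ 8 ‖H‖ ln d_B`. -/
theorem trace_H_commutator_reduced_log_le {da dA dB : ℕ}
    (ρ : Matrix ((Fin da × Fin dA) × Fin dB) ((Fin da × Fin dA) × Fin dB) ℂ)
    (hρ : IsDensityMatrix ρ) (hred : (ptraceR ρ).PosDef)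
    (H : Matrix (Fin dA × Fin dB) (Fin dA × Fin dB) ℂ) (hH : H.IsHermitian) :
    (Complex.I * ((liftA (da := da) H) *
        (ρ * mlog (ptraceR ρ ⊗ₖ (((dB : ℂ))⁻¹ • (1 : Matrix (Fin dB) (Fin dB) ℂ)))
          - mlog (ptraceR ρ ⊗ₖ (((dB : ℂ))⁻¹ • (1 : Matrix (Fin dB) (Fin dB) ℂ))) * ρ)).trace).re ≤
      8 * opNorm H * Real.log dB := by
  have hre : ∀ z : ℂ, (Complex.I * z).re ≤ ‖z‖ := fun z => by
    refine (Complex.re_le_norm _).trans ?_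
    rw [norm_mul, Complex.norm_I, one_mul]
  by_cases hd : 2 ≤ dB
  · exact (hre _).trans (aux_final hd ρ hρ hred H)
  · have hd' : dB = 0 ∨ dB = 1 := by omega
    rcases hd' with rfl | rfl
    · have h1 := hρ.2
      simp [Matrix.trace] at h1
    · have hσ : ptraceR ρ ⊗ₖ (((1 : ℕ) : ℂ)⁻¹ • (1 : Matrix (Fin 1) (Fin 1) ℂ)) = ρ := by
        ext ⟨i, b⟩ ⟨j, c⟩
        fin_cases b
        fin_cases c
        simp [ptraceR, Matrix.kroneckerMap_apply]
      rw [hσ, aux_comm hρ.1.isHermitian]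
      simp
end
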